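/- arXiv:1412.7205 — 6 statements merged into one kernel-verified Lean document; each statement's English description precedes it below -/
import Mathlib

section
/- If H is a 3-uniform hypergraph that contains no linear cycle, then ρ(H) ≤ α(H), i.e., the vertex set of H can be partitioned into at most α(H) parts each of which is a single vertex or a subset of an edge of H. -/
/-!
The statement is proved, by induction on the number of vertices, for hypergraphs whose edges have
two or three vertices; allowing edges of size two is what makes the induction run.

Take a longest linear path `g 0, g 1, …` in `H` and a vertex `a` of its end edge `e = g 0` outside
`g 1`. If an edge `f` meets `e` exactly in `a`, then by maximality `f` meets the path again; let
`g j` be the first edge it meets. If `f` met `g j` in one vertex, then `f, g 0, …, g j` would be a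
linear cycle. Hence `f \ {a}` is the pair `g j \ g (j - 1)`. Two different such edges `f, f'` would
belong to different indices `j`, so they would meet only in `a`, and `e, f, f'` would be three
edges pairwise meeting in exactly one vertex, which is a linear cycle of length 3. So there is at
most one such `f`, and it has three vertices (`exists_end_edge`).

Now delete the vertices of `e`, keep the edges disjoint from `e`, and add the pair `f \ {a}`, if
`f` exists, as a new edge (`reduce`). A linear cycle of the new hypergraph lifts to one of `H` by
putting `a` back into the new edge (`not_hasLinearCycle_reduce`). A partition of the new hypergraph
together with the part `e` is a partition for `H`, and an independent set of the new hypergraph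
stays independent in `H` when `a` is added, so both numbers grow by one.
-/

open Finset

variable {V : Type*} [Fintype V] [DecidableEq V]

/-- A linear cycle: a cyclic sequence of `k ≥ 3` distinct edges in which cyclically
consecutive edges intersect in exactly one vertex and non-consecutive edges are disjoint. -/
def HasLinearCycle (H : Finset (Finset V)) : Prop :=
  ∃ k : ℕ, 3 ≤ k ∧ ∃ e : ZMod k → Finset V,
    Function.Injective e ∧ (∀ i, e i ∈ H) ∧
    (∀ i, (e i ∩ e (i + 1)).card = 1) ∧
    (∀ i j, i ≠ j → i + 1 ≠ j → j + 1 ≠ i → e i ∩ e j = ∅)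

/-- The independence number: the largest size of a set of vertices containing no edge. -/
def indepNum (H : Finset (Finset V)) : ℕ :=
  ((Finset.univ : Finset (Finset V)).filter fun S => ∀ e ∈ H, ¬ e ⊆ S).sup Finset.card

/-! ### Linear paths and linear cycles -/

/-- `g 0, …, g (m - 1)` is a linear path in `H`: consecutive edges meet in exactly one vertex and
other pairs are disjoint. The values of `g` from `m` on are irrelevant. -/
def IsLinPath (H : Finset (Finset V)) (m : ℕ) (g : ℕ → Finset V) : Prop :=
  (∀ i < m, g i ∈ H) ∧ (∀ i, i + 1 < m → (g i ∩ g (i + 1)).card = 1) ∧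
    (∀ i j, i + 1 < j → j < m → g i ∩ g j = ∅)

/-- A linear cycle described by a sequence indexed by `0, …, k - 1` instead of `ZMod k`. -/
lemma hasLinearCycle_of_seq {H : Finset (Finset V)} (h2 : ∀ e ∈ H, 2 ≤ e.card) {k : ℕ}
    (hk : 3 ≤ k) (g : ℕ → Finset V) (hH : ∀ i < k, g i ∈ H)
    (hc : ∀ i, i + 1 < k → (g i ∩ g (i + 1)).card = 1) (hl : (g (k - 1) ∩ g 0).card = 1)
    (hd : ∀ i j, i + 1 < j → j < k → ¬ (i = 0 ∧ j = k - 1) → g i ∩ g j = ∅) :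
    HasLinearCycle H := by
  obtain ⟨n, rfl⟩ : ∃ n, k = n + 1 := ⟨k - 1, by omega⟩
  have hlt : ∀ i : ZMod (n + 1), i.val < n + 1 := fun i => ZMod.val_lt i
  have hv : ∀ i : ZMod (n + 1),
      (i + 1).val = if i.val = n then 0 else i.val + 1 := by
    intro i
    have h1 : (1 : ZMod (n + 1)).val = 1 := ZMod.val_one'' (by omega)
    rw [ZMod.val_add, h1]
    have := hlt i
    split_ifs with h
    · rw [h, Nat.mod_self]
    · exact Nat.mod_eq_of_lt (by omega)
  have key : ∀ i j : ℕ, i < j → j < n + 1 → g i ≠ g j := by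
    intro i j hij hj he
    have hcard := h2 _ (hH j hj)
    by_cases h1 : i + 1 = j
    · have := hc i (by omega)
      rw [h1, he, inter_self] at this
      omega
    · by_cases h2' : i = 0 ∧ j = n + 1 - 1
      · obtain ⟨rfl, rfl⟩ := h2'
        rw [Nat.add_sub_cancel, he, inter_self] at hl
        omega
      · have := hd i j (by omega) hj h2'
        rw [he, inter_self] at this
        rw [this] at hcard
        simp at hcard
  refine ⟨n + 1, hk, fun i => g i.val, ?_, fun i => hH _ (hlt i), ?_, ?_⟩
  · intro i j hij
    apply ZMod.val_injective
    rcases lt_trichotomy i.val j.val with h | h | h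
    · exact absurd hij (key _ _ h (hlt j))
    · exact h
    · exact absurd hij.symm (key _ _ h (hlt i))
  · intro i
    have := hlt i
    simp only [hv]
    split_ifs with h
    · rw [h]; exact hl
    · exact hc _ (by omega)
  · have main : ∀ i j : ZMod (n + 1), i.val < j.val → i + 1 ≠ j → j + 1 ≠ i →
        g i.val ∩ g j.val = ∅ := by
      intro i j hij h1 h2'
      have hi := hlt i
      have hj := hlt j
      have e1 : (i + 1).val ≠ j.val := fun h => h1 (ZMod.val_injective _ h)
      have e2 : (j + 1).val ≠ i.val := fun h => h2' (ZMod.val_injective _ h)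
      rw [hv] at e1 e2
      rw [if_neg (by omega)] at e1
      apply hd _ _ (by omega) hj
      rintro ⟨h0, hn⟩
      rw [if_pos (by omega)] at e2
      omega
    intro i j hij h1 h2'
    rcases lt_trichotomy i.val j.val with h | h | h
    · exact main i j h h1 h2'
    · exact absurd (ZMod.val_injective _ h) hij
    · rw [inter_comm]; exact main j i h h2' h1

lemma hasLinearCycle_of_three {H : Finset (Finset V)} (h2 : ∀ e ∈ H, 2 ≤ e.card)
    {x y z : Finset V} (hx : x ∈ H) (hy : y ∈ H) (hz : z ∈ H) (hxy : (x ∩ y).card = 1)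
    (hyz : (y ∩ z).card = 1) (hzx : (z ∩ x).card = 1) : HasLinearCycle H := by
  refine hasLinearCycle_of_seq h2 le_rfl
    (fun i => if i = 0 then x else if i = 1 then y else z) ?_ ?_ ?_ ?_
  · intro i hi
    interval_cases i <;> simpa
  · intro i hi
    have : i < 2 := by omega
    interval_cases i <;> simpa
  · simpa
  · intro i j hij hj hn
    omega

lemma IsLinPath.length_le {H : Finset (Finset V)} (h2 : ∀ e ∈ H, 2 ≤ e.card) {m : ℕ}
    {g : ℕ → Finset V} (hg : IsLinPath H m g) : m ≤ H.card := by
  have key : ∀ i j : ℕ, i < j → j < m → g i ≠ g j := by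
    intro i j hij hj he
    have hcard := h2 _ (hg.1 j hj)
    by_cases h1 : i + 1 = j
    · have := hg.2.1 i (by omega)
      rw [h1, he, inter_self] at this
      omega
    · have := hg.2.2 i j (by omega) hj
      rw [he, inter_self] at this
      rw [this] at hcard
      simp at hcard
  have := Finset.card_le_card_of_injOn (s := range m) (t := H) g
    (fun i hi => hg.1 i (by simpa using hi)) (by
      intro i hi j hj hij
      simp only [coe_range, Set.mem_Iio] at hi hj
      rcases lt_trichotomy i j with h | h | h
      · exact absurd hij (key _ _ h hj)
      · exact h
      · exact absurd hij.symm (key _ _ h hi))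
  simpa using this

/-! ### The end edge of a longest linear path -/

/-- The end edge `e` of a longest linear path has a vertex `a` such that at most one edge `f`
meets `e` exactly in `a`, and such an `f` has three vertices. -/
lemma exists_end_edge {H : Finset (Finset V)} (h2 : ∀ e ∈ H, 2 ≤ e.card)
    (h3 : ∀ e ∈ H, e.card ≤ 3) (hnc : ¬ HasLinearCycle H) (hne : H.Nonempty) :
    ∃ e ∈ H, ∃ a ∈ e, (∀ f ∈ H, f ∩ e = {a} → f.card = 3) ∧
      (∀ f ∈ H, ∀ f' ∈ H, f ∩ e = {a} → f' ∩ e = {a} → f = f') := by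
  obtain ⟨m, hm, ⟨g, hg⟩, hmax⟩ : ∃ m, 1 ≤ m ∧ (∃ g, IsLinPath H m g) ∧
      ¬ ∃ g, IsLinPath H (m + 1) g := by
    by_contra! hcon
    have hall : ∀ m, ∃ g, IsLinPath H (m + 1) g := by
      intro m
      induction m with
      | zero =>
        obtain ⟨e, he⟩ := hne
        exact ⟨fun _ => e, fun _ _ => he, fun i hi => by omega, fun i j hi hj => by omega⟩
      | succ m ih =>
        obtain ⟨g, hg⟩ := ih
        exact hcon (m + 1) (by omega) ⟨g, hg⟩
    obtain ⟨g, hg⟩ := hall H.card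
    have := hg.length_le h2
    omega
  have he0 : g 0 ∈ H := hg.1 0 (by omega)
  obtain ⟨a, ha, ha1⟩ : ∃ a ∈ g 0, 1 < m → a ∉ g 1 := by
    by_contra! hcon
    have hsub : g 0 ⊆ g 0 ∩ g 1 := fun x hx => mem_inter.2 ⟨hx, (hcon x hx).2⟩
    have hc0 := h2 _ he0
    obtain ⟨x, hx⟩ : (g 0).Nonempty := card_pos.1 (by omega)
    have := hg.2.1 0 (by simpa using (hcon x hx).1)
    have := card_le_card hsub
    simp only [zero_add] at *
    omega
  -- `j` is the least index `≥ 1` with `f` meeting `g j`;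
  -- then `f \ {a}` is `g j` minus its predecessor.
  have key : ∀ f ∈ H, f ∩ g 0 = {a} → ∃ j, 1 ≤ j ∧ j < m ∧ f.erase a = g j \ g (j - 1) ∧
      f.card = 3 ∧ ∀ i, 1 ≤ i → i < j → f ∩ g i = ∅ := by
    intro f hf hfe
    have hex : ∃ j, 1 ≤ j ∧ j < m ∧ f ∩ g j ≠ ∅ := by
      by_contra! hcon
      apply hmax
      refine ⟨fun i => if i = 0 then f else g (i - 1), ?_, ?_, ?_⟩
      · intro i hi
        dsimp only
        split_ifs with h
        · exact hf
        · exact hg.1 _ (by omega)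
      · intro i hi
        rcases Nat.eq_zero_or_pos i with rfl | hi0
        · simp [hfe]
        · have := hg.2.1 (i - 1) (by omega)
          rw [Nat.sub_add_cancel hi0] at this
          simpa [hi0.ne'] using this
      · intro i j hij hj
        rcases Nat.eq_zero_or_pos i with rfl | hi0
        · have : j ≠ 0 := by omega
          simpa [this] using hcon (j - 1) (by omega) (by omega)
        · have : j ≠ 0 := by omega
          simpa [this, hi0.ne'] using hg.2.2 (i - 1) (j - 1) (by omega) (by omega)
    classical
    obtain ⟨hj1, hjm, hjne⟩ := Nat.find_spec hex
    have hmin := fun i (hi : i < Nat.find hex) => Nat.find_min hex hi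
    generalize Nat.find hex = j at hj1 hjm hjne hmin
    have hmin' : ∀ i, 1 ≤ i → i < j → f ∩ g i = ∅ := by
      intro i hi1 hij
      by_contra hcon
      exact hmin i hij ⟨hi1, by omega, hcon⟩
    have haf : a ∈ f := (mem_inter.1 (hfe ▸ mem_singleton_self a : a ∈ f ∩ g 0)).1
    have hcard1 : (f ∩ g j).card ≠ 1 := by
      intro hone
      apply hnc
      refine hasLinearCycle_of_seq h2 (k := j + 2) (by omega)
        (fun i => if i = 0 then f else g (i - 1)) ?_ ?_ ?_ ?_
      · intro i hi
        split_ifs with h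
        · exact hf
        · exact hg.1 _ (by omega)
      · intro i hi
        rcases Nat.eq_zero_or_pos i with rfl | hi0
        · simp [hfe]
        · have := hg.2.1 (i - 1) (by omega)
          rw [Nat.sub_add_cancel hi0] at this
          simpa [hi0.ne'] using this
      · simpa [inter_comm] using hone
      · intro i l hil hl hn
        have hl0 : l ≠ 0 := by omega
        rcases Nat.eq_zero_or_pos i with rfl | hi0
        · simpa [hl0] using hmin' (l - 1) (by omega) (by omega)
        · simpa [hl0, hi0.ne'] using hg.2.2 (i - 1) (l - 1) (by omega) (by omega)
    have hpos : 0 < (f ∩ g j).card := card_pos.2 (nonempty_iff_ne_empty.2 hjne)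
    have haj : a ∉ g j := by
      rcases Nat.lt_or_ge 1 j with h | h
      · intro hh
        have hdis := hg.2.2 0 j (by omega) hjm
        have : a ∈ g 0 ∩ g j := mem_inter.2 ⟨ha, hh⟩
        rw [hdis] at this
        simp at this
      · have : j = 1 := by omega
        subst this
        exact ha1 hjm
    have hsub1 : f ∩ g j ⊆ f.erase a := by
      intro x hx
      rw [mem_inter] at hx
      exact mem_erase.2 ⟨fun h => haj (h ▸ hx.2), hx.1⟩
    have hfc : (f.erase a).card = f.card - 1 := card_erase_of_mem haf
    have hf3 := h3 f hf
    have h12 := card_le_card hsub1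
    have heq1 : f ∩ g j = f.erase a := eq_of_subset_of_card_le hsub1 (by omega)
    have hsub2 : f ∩ g j ⊆ g j \ g (j - 1) := by
      intro x hx
      have hx' := mem_inter.1 hx
      refine mem_sdiff.2 ⟨hx'.2, fun hxp => ?_⟩
      rcases Nat.lt_or_ge 1 j with h | h
      · have : x ∈ f ∩ g (j - 1) := mem_inter.2 ⟨hx'.1, hxp⟩
        rw [hmin' (j - 1) (by omega) (by omega)] at this
        simp at this
      · have hj0 : j - 1 = 0 := by omega
        rw [hj0] at hxp
        have : x ∈ f ∩ g 0 := mem_inter.2 ⟨hx'.1, hxp⟩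
        rw [hfe, mem_singleton] at this
        exact haj (this ▸ hx'.2)
    have hgj3 := h3 _ (hg.1 j hjm)
    have hcons := hg.2.1 (j - 1) (by omega)
    rw [Nat.sub_add_cancel hj1] at hcons
    have hsd := card_sdiff_add_card_inter (g j) (g (j - 1))
    rw [inter_comm (g j)] at hsd
    have heq2 : f ∩ g j = g j \ g (j - 1) := eq_of_subset_of_card_le hsub2 (by omega)
    exact ⟨j, hj1, hjm, heq1.symm.trans heq2, by omega, hmin'⟩
  refine ⟨g 0, he0, a, ha, fun f hf hfe => ?_, ?_⟩
  · obtain ⟨j, -, -, -, h, -⟩ := key f hf hfe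
    exact h
  · intro f hf f' hf' hfe hfe'
    obtain ⟨j, hj1, hjm, hfj, -, hfmin⟩ := key f hf hfe
    obtain ⟨j', hj1', hjm', hfj', -, hfmin'⟩ := key f' hf' hfe'
    have haf : a ∈ f := (mem_inter.1 (hfe ▸ mem_singleton_self a : a ∈ f ∩ g 0)).1
    have haf' : a ∈ f' := (mem_inter.1 (hfe' ▸ mem_singleton_self a : a ∈ f' ∩ g 0)).1
    -- If one edge avoids a path edge containing the rest of the other, they meet only in `a`.
    have three : ∀ x ∈ H, ∀ y ∈ H, x ∩ g 0 = {a} → y ∩ g 0 = {a} → a ∈ x → a ∈ y →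
        ∀ l, x.erase a ⊆ g l → y ∩ g l = ∅ → False := by
      intro x hx y hy hxe hye hax hay l hxl hyl
      have hxy : x ∩ y = {a} := by
        ext v
        simp only [mem_inter, mem_singleton]
        refine ⟨fun hv => ?_, fun hv => hv ▸ ⟨hax, hay⟩⟩
        by_contra hva
        have : v ∈ y ∩ g l := mem_inter.2 ⟨hv.2, hxl (mem_erase.2 ⟨hva, hv.1⟩)⟩
        rw [hyl] at this
        simp at this
      exact hnc (hasLinearCycle_of_three h2 hx hy he0 (by simp [hxy]) (by simp [hye])
        (by rw [inter_comm]; simp [hxe]))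
    rcases lt_trichotomy j j' with h | h | h
    · exact (three f hf f' hf' hfe hfe' haf haf' j (hfj ▸ sdiff_subset)
        (hfmin' j hj1 h)).elim
    · subst h
      rw [← insert_erase haf, ← insert_erase haf', hfj, hfj']
    · exact (three f' hf' f hf hfe' hfe haf' haf j' (hfj' ▸ sdiff_subset)
        (hfmin j' hj1' h)).elim

/-! ### Deleting the end edge -/

/-- The hypergraph left after deleting the vertices of `e`: the edges disjoint from `e`, and the
sets `f \ {a}` for the edges `f` meeting `e` exactly in `a`. -/
def reduce (H : Finset (Finset V)) (e : Finset V) (a : V) : Finset (Finset V) :=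
  H.filter (fun f => f ∩ e = ∅) ∪ (H.filter fun f => f ∩ e = {a}).image fun f => f.erase a

lemma mem_reduce {H : Finset (Finset V)} {e : Finset V} {a : V} {x : Finset V} :
    x ∈ reduce H e a ↔
      (x ∈ H ∧ x ∩ e = ∅) ∨ ∃ f, (f ∈ H ∧ f ∩ e = {a}) ∧ f.erase a = x := by
  simp [reduce]

lemma inter_eq_empty_of_mem_reduce {H : Finset (Finset V)} {e : Finset V} {a : V} {x : Finset V}
    (hx : x ∈ reduce H e a) : x ∩ e = ∅ := by
  rcases mem_reduce.1 hx with h | ⟨f, ⟨-, hfe⟩, rfl⟩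
  · exact h.2
  · rw [erase_inter, hfe]
    simp

lemma not_hasLinearCycle_reduce {H : Finset (Finset V)} {e : Finset V} {a : V} (ha : a ∈ e)
    (huniq : ∀ f ∈ H, ∀ f' ∈ H, f ∩ e = {a} → f' ∩ e = {a} → f = f')
    (hnc : ¬ HasLinearCycle H) : ¬ HasLinearCycle (reduce H e a) := by
  rintro ⟨k, hk, c, hinj, hcH, hc1, hc0⟩
  apply hnc
  have hlift : ∀ x ∈ reduce H e a, ∃ y ∈ H, y.erase a = x ∧ (a ∈ y → y ∩ e = {a}) := by
    intro x hx
    rcases mem_reduce.1 hx with h | ⟨f, ⟨hf, hfe⟩, rfl⟩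
    · have hax : a ∉ x := fun hh => by
        have : a ∈ x ∩ e := mem_inter.2 ⟨hh, ha⟩
        rw [h.2] at this
        simp at this
      exact ⟨x, h.1, erase_eq_of_notMem hax, fun hh => absurd hh hax⟩
    · exact ⟨f, hf, rfl, fun _ => hfe⟩
  choose d hdH hde hda using fun i => hlift (c i) (hcH i)
  -- Since only one edge can receive `a` back, the intersections do not change.
  have hint : ∀ i j, i ≠ j → d i ∩ d j = c i ∩ c j := by
    intro i j hij
    rw [← hde i, ← hde j, erase_inter, inter_erase, erase_idem]
    refine (erase_eq_of_notMem fun hh => hij (hinj ?_)).symm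
    have hh' := mem_inter.1 hh
    rw [← hde i, ← hde j,
      huniq _ (hdH i) _ (hdH j) (hda i hh'.1) (hda j hh'.2)]
  have hsucc : ∀ i : ZMod k, i ≠ i + 1 := by
    intro i hi
    have : Fact (1 < k) := ⟨by omega⟩
    exact one_ne_zero (left_eq_add.1 hi)
  refine ⟨k, hk, d, fun i j hij => hinj ?_, hdH, fun i => ?_, fun i j h h' h'' => ?_⟩
  · rw [← hde i, ← hde j, hij]
  · rw [hint _ _ (hsucc i)]
    exact hc1 i
  · rw [hint _ _ h]
    exact hc0 i j h h' h''

/-! ### The induction -/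

/-- The theorem for hypergraphs with edges of size two or three on the vertex set `U`, producing
the partition `P` and an independent set `S` at least as large. -/
lemma exists_partition_indep (n : ℕ) : ∀ (U : Finset V) (H : Finset (Finset V)), U.card ≤ n →
    (∀ e ∈ H, e ⊆ U) → (∀ e ∈ H, 2 ≤ e.card) → (∀ e ∈ H, e.card ≤ 3) → ¬ HasLinearCycle H →
    ∃ (P : Finset (Finset V)) (S : Finset V),
      (∀ p ∈ P, ∀ q ∈ P, p ≠ q → Disjoint p q) ∧ (∀ v ∈ U, ∃ p ∈ P, v ∈ p) ∧
      (∀ p ∈ P, p ⊆ U) ∧ (∀ p ∈ P, (∃ v, p = {v}) ∨ ∃ e ∈ H, p ⊆ e) ∧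
      S ⊆ U ∧ (∀ e ∈ H, ¬ e ⊆ S) ∧ P.card ≤ S.card := by
  induction n with
  | zero =>
    intro U H hU hHU h2 h3 hnc
    have hU0 : U = ∅ := card_eq_zero.1 (by omega)
    subst hU0
    refine ⟨∅, ∅, by simp, by simp, by simp, by simp, by simp, fun e he hsub => ?_, by simp⟩
    have := h2 e he
    rw [subset_empty.1 hsub] at this
    simp at this
  | succ n ih =>
    intro U H hU hHU h2 h3 hnc
    rcases H.eq_empty_or_nonempty with rfl | hne
    · refine ⟨U.image fun v => {v}, U, ?_, ?_, ?_, ?_, subset_rfl, by simp, card_image_le⟩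
      · intro p hp q hq hpq
        obtain ⟨v, -, rfl⟩ := mem_image.1 hp
        obtain ⟨w, -, rfl⟩ := mem_image.1 hq
        rw [disjoint_singleton]
        rintro rfl
        exact hpq rfl
      · exact fun v hv => ⟨{v}, mem_image_of_mem _ hv, mem_singleton_self v⟩
      · intro p hp
        obtain ⟨v, hv, rfl⟩ := mem_image.1 hp
        simpa using hv
      · intro p hp
        obtain ⟨v, hv, rfl⟩ := mem_image.1 hp
        exact Or.inl ⟨v, rfl⟩
    · obtain ⟨e, he, a, ha, hthree, huniq⟩ := exists_end_edge h2 h3 hnc hne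
      have haf : ∀ f : Finset V, f ∩ e = {a} → a ∈ f := fun f hf =>
        (mem_inter.1 (hf ▸ mem_singleton_self a : a ∈ f ∩ e)).1
      have hcardU : (U \ e).card ≤ n := by
        have := card_sdiff_add_card_eq_card (hHU e he)
        have := h2 e he
        omega
      obtain ⟨P, S, hPd, hPc, hPU, hPe, hSU, hSi, hPS⟩ := ih (U \ e) (reduce H e a) hcardU
        (by
          intro x hx
          rw [subset_sdiff, disjoint_iff_inter_eq_empty]
          refine ⟨?_, inter_eq_empty_of_mem_reduce hx⟩
          rcases mem_reduce.1 hx with h | ⟨f, hf, rfl⟩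
          · exact hHU x h.1
          · exact (erase_subset _ _).trans (hHU f hf.1))
        (by
          intro x hx
          rcases mem_reduce.1 hx with h | ⟨f, hf, rfl⟩
          · exact h2 x h.1
          · rw [card_erase_of_mem (haf f hf.2), hthree f hf.1 hf.2])
        (by
          intro x hx
          rcases mem_reduce.1 hx with h | ⟨f, hf, rfl⟩
          · exact h3 x h.1
          · exact (card_le_card (erase_subset _ _)).trans (h3 f hf.1))
        (not_hasLinearCycle_reduce ha huniq hnc)
      have hPdis : ∀ p ∈ P, Disjoint e p := fun p hp =>
        (disjoint_sdiff (s := e) (t := U)).mono_right (hPU p hp)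
      have hSdis : ∀ v ∈ S, v ∉ e := fun v hv => (mem_sdiff.1 (hSU hv)).2
      have haS : a ∉ S := fun h => hSdis a h ha
      refine ⟨insert e P, insert a S, ?_, ?_, ?_, ?_, ?_, ?_, ?_⟩
      · intro p hp q hq hpq
        rcases mem_insert.1 hp with hpe | hpP
        · rcases mem_insert.1 hq with hqe | hqP
          · exact absurd (hpe.trans hqe.symm) hpq
          · exact hpe ▸ hPdis q hqP
        · rcases mem_insert.1 hq with hqe | hqP
          · exact hqe ▸ (hPdis p hpP).symm
          · exact hPd p hpP q hqP hpq
      · intro v hv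
        by_cases hve : v ∈ e
        · exact ⟨e, mem_insert_self _ _, hve⟩
        · obtain ⟨p, hp, hvp⟩ := hPc v (mem_sdiff.2 ⟨hv, hve⟩)
          exact ⟨p, mem_insert_of_mem hp, hvp⟩
      · intro p hp
        rcases mem_insert.1 hp with rfl | hp
        · exact hHU p he
        · exact (hPU p hp).trans sdiff_subset
      · intro p hp
        rcases mem_insert.1 hp with rfl | hp
        · exact Or.inr ⟨p, he, subset_rfl⟩
        · rcases hPe p hp with h | ⟨x, hx, hpx⟩
          · exact Or.inl h
          · rcases mem_reduce.1 hx with h | ⟨f, hf, rfl⟩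
            · exact Or.inr ⟨x, h.1, hpx⟩
            · exact Or.inr ⟨f, hf.1, hpx.trans (erase_subset _ _)⟩
      · exact insert_subset (hHU e he ha) (hSU.trans sdiff_subset)
      · intro f hf hfS
        by_cases haf' : a ∈ f
        · have hfe : f ∩ e = {a} := by
            ext v
            simp only [mem_inter, mem_singleton]
            refine ⟨fun hv => ?_, fun hv => hv ▸ ⟨haf', ha⟩⟩
            rcases mem_insert.1 (hfS hv.1) with h | h
            · exact h
            · exact absurd hv.2 (hSdis v h)
          exact hSi _ (mem_reduce.2 (Or.inr ⟨f, ⟨hf, hfe⟩, rfl⟩)) (subset_insert_iff.1 hfS)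
        · have hfS' : f ⊆ S := (subset_insert_iff_of_notMem haf').1 hfS
          refine hSi f (mem_reduce.2 (Or.inl ⟨hf, ?_⟩)) hfS'
          rw [← disjoint_iff_inter_eq_empty, disjoint_left]
          exact fun v hv => hSdis v (hfS' hv)
      · rw [card_insert_of_notMem haS]
        exact (card_insert_le _ _).trans (by omega)

/-- If `H` is a 3-uniform hypergraph with no linear cycle, then `ρ(H) ≤ α(H)`:
the vertex set can be partitioned into at most `α(H)` parts, each a single vertex or a
subset of an edge of `H`. -/
theorem rho_le_alpha (H : Finset (Finset V)) (h3 : ∀ e ∈ H, e.card = 3)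
    (hnc : ¬ HasLinearCycle H) :
    ∃ P : Finset (Finset V),
      (∀ p ∈ P, ∀ q ∈ P, p ≠ q → Disjoint p q) ∧
      (∀ v : V, ∃ p ∈ P, v ∈ p) ∧
      (∀ p ∈ P, (∃ v, p = {v}) ∨ ∃ e ∈ H, p ⊆ e) ∧
      P.card ≤ indepNum H := by
  obtain ⟨P, S, hPd, hPc, -, hPe, -, hSi, hPS⟩ :=
    exists_partition_indep _ univ H le_rfl (fun e _ => subset_univ e)
      (fun e he => by rw [h3 e he]; omega) (fun e he => (h3 e he).le) hnc
  refine ⟨P, hPd, fun v => hPc v (mem_univ v), hPe, hPS.trans ?_⟩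
  exact le_sup (f := Finset.card) (mem_filter.2 ⟨mem_univ S, hSi⟩)
end

section
/- If H is a 3-uniform hypergraph that contains no linear cycle, then χ(H) ≤ 3, i.e., the vertices of H can be colored with 3 colors so that no edge of H has all three of its vertices the same color. -/
/-!
A *linear tree* in `H` is built from a single vertex by repeatedly adding an edge of `H` that meets
the current vertex set in exactly one vertex. Any linear tree has a vertex 3-coloring in which each
of its edges is rainbow (`IsLinTree.exists_rainbow`), and any two of its vertices are joined by a
linear path of tree edges (`IsLinTree.exists_path`).

Let `S` be the vertex set of a linear tree that is maximal in `H`. No edge of `H` meets `S` in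
exactly one vertex. If an edge `e` meets `S` in at least two vertices, then two of them lie in a
common tree edge: otherwise a shortest tree path between two vertices of `e`, closed up by `e`, is
a linear cycle (`exists_two_mem_of_path`). Hence a rainbow coloring of the tree makes no edge that
meets `S` monochromatic, whatever the colors outside `S`. The edges disjoint from `S` are handled
by induction on the vertex set, after deleting `S`.
-/

open Finset

variable {V : Type*} [Fintype V] [DecidableEq V]

/-! ### Linear paths and linear trees -/

/-- `f 0, …, f k` are edges from `T` forming a linear path from `u` to `v`: consecutive edges share
exactly one vertex, non-consecutive ones are disjoint, `u` lies only in the first edge and `v` only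
in the last one. The path has `k + 1` edges; values of `f` beyond `k` are irrelevant. -/
structure IsLinPath_s1 (T : Finset (Finset V)) (k : ℕ) (f : ℕ → Finset V) (u v : V) : Prop where
  mem : ∀ i ≤ k, f i ∈ T
  consec : ∀ i < k, (f i ∩ f (i + 1)).card = 1
  disj : ∀ i j, i + 1 < j → j ≤ k → f i ∩ f j = ∅
  start : ∀ i ≤ k, (u ∈ f i ↔ i = 0)
  last : ∀ i ≤ k, (v ∈ f i ↔ i = k)

/-- `IsLinTree H S T`: `T` is the edge set and `S` the vertex set of a linear tree in `H`. -/
inductive IsLinTree (H : Finset (Finset V)) : Finset V → Finset (Finset V) → Prop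
  | single (v : V) : IsLinTree H {v} ∅
  | add (S : Finset V) (T : Finset (Finset V)) (e : Finset V) (s : V) :
      IsLinTree H S T → e ∈ H → S ∩ e = {s} → IsLinTree H (S ∪ e) (insert e T)

theorem IsLinTree.edges_subset {H : Finset (Finset V)} {S : Finset V} {T : Finset (Finset V)}
    (h : IsLinTree H S T) : T ⊆ H := by
  induction h with
  | single v => simp
  | add S T e s _ he _ ih => exact Finset.insert_subset he ih

theorem IsLinTree.edge_subset {H : Finset (Finset V)} {S : Finset V} {T : Finset (Finset V)}
    (h : IsLinTree H S T) : ∀ e ∈ T, e ⊆ S := by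
  induction h with
  | single v => simp
  | add S T e s _ he _ ih =>
    intro g hg
    rcases Finset.mem_insert.1 hg with rfl | hg
    · exact Finset.subset_union_right
    · exact (ih g hg).trans Finset.subset_union_left

theorem IsLinTree.vertices_subset {H : Finset (Finset V)} {S : Finset V} {T : Finset (Finset V)}
    (h : IsLinTree H S T) {U : Finset V} (hU : ∀ e ∈ H, e ⊆ U) (hne : (S ∩ U).Nonempty) :
    S ⊆ U := by
  induction h with
  | single v =>
    obtain ⟨x, hx⟩ := hne
    simp only [Finset.mem_inter, Finset.mem_singleton] at hx
    simpa [← hx.1] using hx.2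
  | add S T e s _ he hs ih =>
    have hse : s ∈ S ∩ e := by simp [hs]
    rw [Finset.mem_inter] at hse
    exact Finset.union_subset
      (ih ⟨s, Finset.mem_inter.2 ⟨hse.1, hU e he hse.2⟩⟩) (hU e he)

theorem IsLinTree.exists_rainbow {H : Finset (Finset V)} (h3 : ∀ e ∈ H, e.card = 3)
    {S : Finset V} {T : Finset (Finset V)} (h : IsLinTree H S T) :
    ∃ c : V → Fin 3, ∀ e ∈ T, ∀ x ∈ e, ∀ y ∈ e, x ≠ y → c x ≠ c y := by
  induction h with
  | single v => exact ⟨fun _ => 0, by simp⟩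
  | add S T e s hT he hs ih =>
    obtain ⟨c, hc⟩ := ih
    have hse : s ∈ S ∩ e := by simp [hs]
    rw [Finset.mem_inter] at hse
    have hcard : (e.erase s).card = 2 := by rw [Finset.card_erase_of_mem hse.2, h3 e he]
    obtain ⟨a, b, hab, heab⟩ := Finset.card_eq_two.1 hcard
    have hmem : ∀ x, x ∈ e ↔ x = s ∨ x = a ∨ x = b := by
      intro x
      rw [← Finset.insert_erase hse.2, heab]; simp
    have hnew : ∀ x ∈ e, x ∈ S → x = s := by
      intro x hx hxS
      have : x ∈ S ∩ e := Finset.mem_inter.2 ⟨hxS, hx⟩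
      simpa [hs] using this
    have ha : a ∈ e.erase s := by simp [heab]
    have hb : b ∈ e.erase s := by simp [heab]
    rw [Finset.mem_erase] at ha hb
    have haS : a ∉ S := fun hx => ha.1 (hnew a ha.2 hx)
    have hbS : b ∉ S := fun hx => hb.1 (hnew b hb.2 hx)
    refine ⟨fun x => if x = a then c s + 1 else if x = b then c s + 2 else c x, ?_⟩
    intro g hg x hx y hy hxy
    rcases Finset.mem_insert.1 hg with rfl | hg
    · have key : ∀ t : Fin 3, t ≠ t + 1 ∧ t ≠ t + 2 ∧ t + 1 ≠ t + 2 := by decide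
      obtain ⟨k1, k2, k3⟩ := key (c s)
      rw [hmem] at hx hy
      rcases hx with rfl | rfl | rfl <;> rcases hy with rfl | rfl | rfl <;> grind
    · have hxS := hT.edge_subset g hg hx
      have hyS := hT.edge_subset g hg hy
      have := hc g hg x hx y hy hxy
      grind

/-! ### Paths in linear trees -/

theorem IsLinPath_s1.mono {T T' : Finset (Finset V)} (hT : T ⊆ T') {k : ℕ} {f : ℕ → Finset V}
    {u v : V} (h : IsLinPath_s1 T k f u v) : IsLinPath_s1 T' k f u v :=
  ⟨fun i hi => hT (h.mem i hi), h.consec, h.disj, h.start, h.last⟩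

/-- A path inside `S` ending in `s` extends by an edge `e` that meets `S` only in `s`. -/
theorem IsLinPath_s1.extend {T : Finset (Finset V)} {S e : Finset V} {s : V}
    (hTS : ∀ g ∈ T, g ⊆ S) (hs : S ∩ e = {s}) {k : ℕ} {f : ℕ → Finset V} {u v : V}
    (h : IsLinPath_s1 T k f u s) (hus : u ≠ s) (hv : v ∈ e) (hvs : v ≠ s) :
    IsLinPath_s1 (insert e T) (k + 1) (fun i => if i ≤ k then f i else e) u v := by
  have hS : ∀ x, x ∈ S → x ∈ e → x = s := by
    intro x hx hxe
    have : x ∈ S ∩ e := Finset.mem_inter.2 ⟨hx, hxe⟩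
    simpa [hs] using this
  have hse : s ∈ e := by
    have : s ∈ S ∩ e := by simp [hs]
    exact (Finset.mem_inter.1 this).2
  have hf : ∀ i ≤ k, ∀ x ∈ f i, x ∈ S := fun i hi x hx => hTS _ (h.mem i hi) hx
  constructor
  · intro i hi
    by_cases hik : i ≤ k
    · simp [hik, h.mem i hik]
    · simp [hik]
  · intro i hi
    by_cases hik : i < k
    · have h1 : i ≤ k := hik.le
      have h2 : i + 1 ≤ k := hik
      simp only [h1, h2, if_true]
      exact h.consec i hik
    · obtain rfl : i = k := by omega
      simp only [le_refl, if_true, Nat.not_succ_le_self, if_false]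
      rw [Finset.card_eq_one]
      refine ⟨s, ?_⟩
      ext x
      rw [Finset.mem_inter, Finset.mem_singleton]
      constructor
      · rintro ⟨hx, hxe⟩
        exact hS x (hf i le_rfl x hx) hxe
      · rintro rfl
        exact ⟨(h.last i le_rfl).2 rfl, hse⟩
  · intro i j hij hj
    by_cases hjk : j ≤ k
    · have h1 : i ≤ k := by omega
      simp only [h1, hjk, if_true]
      exact h.disj i j hij hjk
    · have h1 : i ≤ k := by omega
      simp only [h1, hjk, if_true, if_false]
      rw [Finset.eq_empty_iff_forall_notMem]
      intro x hx
      rw [Finset.mem_inter] at hx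
      obtain rfl := hS x (hf i h1 x hx.1) hx.2
      have := (h.last i h1).1 hx.1
      omega
  · intro i hi
    by_cases hik : i ≤ k
    · simp only [hik, if_true]
      exact h.start i hik
    · simp only [hik, if_false]
      have huS : u ∈ S := hf 0 (Nat.zero_le _) u ((h.start 0 (Nat.zero_le _)).2 rfl)
      exact ⟨fun hue => absurd (hS u huS hue) hus, fun h0 => by omega⟩
  · intro i hi
    by_cases hik : i ≤ k
    · simp only [hik, if_true]
      exact ⟨fun hx => absurd (hS v (hf i hik v hx) hv) hvs, fun h0 => by omega⟩
    · simp only [hik, if_false]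
      exact ⟨fun _ => by omega, fun _ => hv⟩

theorem IsLinPath_s1.reverse {T : Finset (Finset V)} {k : ℕ} {f : ℕ → Finset V} {u v : V}
    (h : IsLinPath_s1 T k f u v) : IsLinPath_s1 T k (fun i => f (k - i)) v u := by
  constructor
  · intro i hi
    exact h.mem _ (Nat.sub_le _ _)
  · intro i hi
    have := h.consec (k - (i + 1)) (by omega)
    rw [show k - (i + 1) + 1 = k - i by omega] at this
    rwa [Finset.inter_comm]
  · intro i j hij hj
    rw [Finset.inter_comm]
    exact h.disj _ _ (by omega) (by omega)
  · intro i hi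
    rw [h.last _ (Nat.sub_le _ _)]
    omega
  · intro i hi
    rw [h.start _ (Nat.sub_le _ _)]
    omega

theorem IsLinTree.exists_path {H : Finset (Finset V)} {S : Finset V} {T : Finset (Finset V)}
    (h : IsLinTree H S T) : ∀ u ∈ S, ∀ v ∈ S, u ≠ v → ∃ k f, IsLinPath_s1 T k f u v := by
  induction h with
  | single v => simp
  | add S T e s hT he hs ih =>
    have hse : s ∈ S ∩ e := by simp [hs]
    rw [Finset.mem_inter] at hse
    have mixed : ∀ u ∈ S, ∀ v ∈ e, u ∉ e → v ∉ S →
        ∃ k f, IsLinPath_s1 (insert e T) k f u v := by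
      intro u hu v hv hue hvS
      have hus : u ≠ s := fun h => hue (h ▸ hse.2)
      have hvs : v ≠ s := fun h => hvS (h ▸ hse.1)
      obtain ⟨k, f, hf⟩ := ih u hu s hse.1 hus
      exact ⟨_, _, hf.extend hT.edge_subset hs hus hv hvs⟩
    intro u hu v hv huv
    by_cases hS : u ∈ S ∧ v ∈ S
    · obtain ⟨k, f, hf⟩ := ih u hS.1 v hS.2 huv
      exact ⟨k, f, hf.mono (Finset.subset_insert _ _)⟩
    by_cases hE : u ∈ e ∧ v ∈ e
    · refine ⟨0, fun _ => e, ⟨fun _ _ => Finset.mem_insert_self _ _, by omega, by omega, ?_, ?_⟩⟩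
      · intro i hi; simpa [hE.1] using hi
      · intro i hi; simpa [hE.2] using hi
    rw [Finset.mem_union] at hu hv
    by_cases huS : u ∈ S
    · exact mixed u huS v (by tauto) (by tauto) (by tauto)
    · obtain ⟨k, f, hf⟩ := mixed v (by tauto) u (by tauto) (by tauto) huS
      exact ⟨_, _, hf.reverse⟩

/-! ### Closing a path to a cycle -/

/-- An edge `e` meeting a path with at least two edges only in the end vertices of the path closes
it to a linear cycle. -/
theorem hasLinearCycle_of_path {H : Finset (Finset V)} {e : Finset V} (he : e ∈ H)
    {k : ℕ} {f : ℕ → Finset V} {u v : V} (hk : 1 ≤ k) (h : IsLinPath_s1 H k f u v)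
    (hue : u ∈ e) (hve : v ∈ e) (h3 : ∀ e ∈ H, e.card = 3)
    (hends : ∀ i ≤ k, ∀ x ∈ f i, x ∈ e → x = u ∨ x = v) : HasLinearCycle H := by
  have hfirst : e ∩ f 0 = {u} := by
    ext x
    rw [Finset.mem_inter, Finset.mem_singleton]
    constructor
    · rintro ⟨hxe, hx⟩
      rcases hends 0 (by omega) x hx hxe with h0 | rfl
      · exact h0
      · have := (h.last 0 (by omega)).1 hx
        omega
    · rintro rfl
      exact ⟨hue, (h.start 0 (by omega)).2 rfl⟩
  have hlast : f k ∩ e = {v} := by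
    ext x
    rw [Finset.mem_inter, Finset.mem_singleton]
    constructor
    · rintro ⟨hx, hxe⟩
      rcases hends k le_rfl x hx hxe with rfl | h0
      · have := (h.start k le_rfl).1 hx
        omega
      · exact h0
    · rintro rfl
      exact ⟨(h.last k le_rfl).2 rfl, hve⟩
  have hmid : ∀ i, 0 < i → i < k → f i ∩ e = ∅ := by
    intro i h0 hi
    rw [Finset.eq_empty_iff_forall_notMem]
    intro x hx
    rw [Finset.mem_inter] at hx
    rcases hends i hi.le x hx.1 hx.2 with rfl | rfl
    · have := (h.start i hi.le).1 hx.1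
      omega
    · have := (h.last i hi.le).1 hx.1
      omega
  -- the cyclic sequence `f 0, …, f k, e`, indexed by representatives in `0, …, k + 1`
  let g : ℕ → Finset V := fun i => if i ≤ k then f i else e
  have gf : ∀ i ≤ k, g i = f i := fun i hi => if_pos hi
  have ge : g (k + 1) = e := if_neg (by omega)
  have gH : ∀ i, g i ∈ H := by
    intro i
    by_cases hi : i ≤ k
    · rw [gf i hi]; exact h.mem i hi
    · simpa [g, hi] using he
  have gcons : ∀ i ≤ k, (g i ∩ g (i + 1)).card = 1 := by
    intro i hi
    rcases hi.lt_or_eq with hi | rfl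
    · rw [gf i hi.le, gf (i + 1) hi]
      exact h.consec i hi
    · rw [gf i le_rfl, ge, hlast, Finset.card_singleton]
  have gwrap : (g (k + 1) ∩ g 0).card = 1 := by
    rw [ge, gf 0 (by omega), hfirst, Finset.card_singleton]
  have gdisj : ∀ i j, i + 1 < j → j ≤ k + 1 → ¬ (i = 0 ∧ j = k + 1) → g i ∩ g j = ∅ := by
    intro i j hij hj hne
    rcases hj.lt_or_eq with hj | rfl
    · rw [gf i (by omega), gf j (by omega)]
      exact h.disj i j hij (by omega)
    · rw [gf i (by omega), ge]
      exact hmid i (by omega) (by omega)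
  have gne : ∀ i j, i < j → j ≤ k + 1 → g i ≠ g j := by
    intro i j hij hj heq
    have c3 := h3 _ (gH j)
    have hle : (g i ∩ g j).card ≤ 1 := by
      by_cases h1 : i + 1 = j
      · subst h1
        exact (gcons i (by omega)).le
      · by_cases h2 : i = 0 ∧ j = k + 1
        · obtain ⟨rfl, rfl⟩ := h2
          rw [Finset.inter_comm]
          exact gwrap.le
        · rw [gdisj i j (by omega) hj h2]
          simp
    rw [heq, Finset.inter_self] at hle
    omega
  have hlt : ∀ i : ZMod (k + 2), i.val < k + 2 := fun i => ZMod.val_lt i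
  have hsucc : ∀ i : ZMod (k + 2), (i + 1).val = if i.val = k + 1 then 0 else i.val + 1 := by
    intro i
    have h1 : (1 : ZMod (k + 2)).val = 1 := ZMod.val_one'' (by omega)
    have := hlt i
    rw [ZMod.val_add, h1]
    split_ifs with hi
    · rw [hi, Nat.mod_self]
    · exact Nat.mod_eq_of_lt (by omega)
  have hinj : ∀ i j : ZMod (k + 2), i.val = j.val → i = j :=
    fun i j hij => ZMod.val_injective _ hij
  refine ⟨k + 2, by omega, fun i => g i.val, ?_, fun i => gH _, ?_, ?_⟩
  · intro i j hij
    apply hinj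
    by_contra hne
    rcases Nat.lt_or_gt_of_ne hne with hl | hl
    · exact gne _ _ hl (Nat.le_of_lt_succ (hlt j)) hij
    · exact gne _ _ hl (Nat.le_of_lt_succ (hlt i)) hij.symm
  · intro i
    have := hlt i
    simp only [hsucc]
    split_ifs with hi
    · rw [hi]; exact gwrap
    · exact gcons _ (by omega)
  · have main : ∀ i j : ZMod (k + 2), i.val < j.val → i + 1 ≠ j → j + 1 ≠ i →
        g i.val ∩ g j.val = ∅ := by
      intro i j hij h1 h2
      have hi := hlt i
      have hj := hlt j
      have h1' : ¬ (i + 1).val = j.val := fun hh => h1 (hinj _ _ hh)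
      have h2' : ¬ (j + 1).val = i.val := fun hh => h2 (hinj _ _ hh)
      rw [hsucc] at h1' h2'
      apply gdisj <;> grind
    intro i j hij h1 h2
    have hne : i.val ≠ j.val := fun hh => hij (hinj _ _ hh)
    rcases Nat.lt_or_gt_of_ne hne with hl | hl
    · exact main i j hl h1 h2
    · have := main j i hl h2 h1
      rwa [Finset.inter_comm] at this

/-- In an `H` without linear cycles, if a path in `T` joins two vertices of an edge `e`, then some
edge in `T` contains two vertices of `e`. The induction on the length cuts the path at a
third vertex of `e`, if it meets one. -/
theorem exists_two_mem_of_path {H T : Finset (Finset V)} (hTH : T ⊆ H)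
    (h3 : ∀ e ∈ H, e.card = 3) (hnc : ¬ HasLinearCycle H) {e : Finset V} (he : e ∈ H) {u : V}
    (hue : u ∈ e) (k : ℕ) : ∀ (f : ℕ → Finset V) (v : V), v ∈ e → u ≠ v → IsLinPath_s1 T k f u v →
      ∃ g ∈ T, ∃ x ∈ e, ∃ y ∈ e, x ∈ g ∧ y ∈ g ∧ x ≠ y := by
  induction k using Nat.strong_induction_on with
  | _ k ih =>
    intro f v hve huv h
    by_cases hk : k = 0
    · subst hk
      exact ⟨f 0, h.mem 0 le_rfl, u, hue, v, hve, (h.start 0 le_rfl).2 rfl,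
        (h.last 0 le_rfl).2 rfl, huv⟩
    by_cases hends : ∀ i ≤ k, ∀ x ∈ f i, x ∈ e → x = u ∨ x = v
    · exact absurd (hasLinearCycle_of_path he (by omega) (h.mono hTH) hue hve h3 hends) hnc
    push Not at hends
    obtain ⟨i, hi, w, hwi, hwe, hwu, hwv⟩ := hends
    have hex : ∃ i, w ∈ f i := ⟨i, hwi⟩
    have hmin : Nat.find hex ≤ i := Nat.find_min' hex hwi
    have hw : w ∈ f (Nat.find hex) := Nat.find_spec hex
    have hnot : ∀ j < Nat.find hex, w ∉ f j := fun j hj => Nat.find_min hex hj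
    generalize Nat.find hex = m at hmin hw hnot
    rcases (hmin.trans hi).lt_or_eq with hm | rfl
    · refine ih m hm f w hwe (Ne.symm hwu) ⟨?_, ?_, ?_, ?_, ?_⟩
      · exact fun j hj => h.mem j (by omega)
      · exact fun j hj => h.consec j (by omega)
      · exact fun j l hjl hl => h.disj j l hjl (by omega)
      · exact fun j hj => h.start j (by omega)
      · intro j hj
        constructor
        · intro hwj
          by_contra hne
          exact hnot j (by omega) hwj
        · rintro rfl
          exact hw
    · exact ⟨f m, h.mem m le_rfl, w, hwe, v, hve, hw, (h.last m le_rfl).2 rfl, hwv⟩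

/-! ### The coloring -/

/-- The theorem for the edges inside a vertex set `U`, by induction on `U`: color a maximal linear
tree rainbow and delete its vertices. -/
theorem exists_coloring_within {H : Finset (Finset V)} (h3 : ∀ e ∈ H, e.card = 3)
    (hnc : ¬ HasLinearCycle H) (U : Finset V) :
    ∃ c : V → Fin 3, ∀ e ∈ H, e ⊆ U → ∃ x ∈ e, ∃ y ∈ e, c x ≠ c y := by
  classical
  induction U using Finset.strongInduction with
  | _ U ih =>
    rcases U.eq_empty_or_nonempty with rfl | ⟨r, hr⟩
    · refine ⟨fun _ => 0, fun e he heU => ?_⟩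
      have := h3 e he
      rw [Finset.subset_empty.1 heU] at this
      simp at this
    let H' := H.filter (· ⊆ U)
    have hH'H : H' ⊆ H := Finset.filter_subset _ _
    have hH'U : ∀ e ∈ H', e ⊆ U := fun e he => (Finset.mem_filter.1 he).2
    obtain ⟨S, hS, hmax⟩ := Finset.exists_max_image
      ((Finset.univ : Finset (Finset V)).filter fun S => r ∈ S ∧ ∃ T, IsLinTree H' S T)
      Finset.card ⟨{r}, by simpa using ⟨∅, IsLinTree.single r⟩⟩
    simp only [Finset.mem_filter, Finset.mem_univ, true_and] at hS hmax
    obtain ⟨hrS, T, hT⟩ := hS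
    have hSU : S ⊆ U := hT.vertices_subset hH'U ⟨r, Finset.mem_inter.2 ⟨hrS, hr⟩⟩
    have hTH : T ⊆ H := hT.edges_subset.trans hH'H
    obtain ⟨c₁, hc₁⟩ := hT.exists_rainbow fun e he => h3 e (hH'H he)
    obtain ⟨c₂, hc₂⟩ := ih (U \ S) (Finset.sdiff_ssubset hSU ⟨r, hrS⟩)
    refine ⟨fun x => if x ∈ S then c₁ x else c₂ x, fun e he heU => ?_⟩
    by_cases hzero : e ∩ S = ∅
    · have hdis : ∀ x ∈ e, x ∉ S := fun x hx hxS => by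
        have : x ∈ e ∩ S := Finset.mem_inter.2 ⟨hx, hxS⟩
        simp [hzero] at this
      obtain ⟨x, hx, y, hy, hxy⟩ := hc₂ e he fun x hx =>
        Finset.mem_sdiff.2 ⟨heU hx, hdis x hx⟩
      exact ⟨x, hx, y, hy, by simpa [hdis x hx, hdis y hy] using hxy⟩
    -- maximality of the tree excludes edges meeting `S` in one vertex
    have hone : (e ∩ S).card ≠ 1 := by
      intro h1
      obtain ⟨s, hs⟩ := Finset.card_eq_one.1 h1
      have hle := hmax (S ∪ e) ⟨Finset.mem_union_left _ hrS, _,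
        hT.add S T e s (Finset.mem_filter.2 ⟨he, heU⟩) (by rw [Finset.inter_comm, hs])⟩
      have heq := Finset.card_union_add_card_inter S e
      rw [Finset.inter_comm, h1, h3 e he] at heq
      omega
    have hpos : 0 < (e ∩ S).card := Finset.card_pos.2 (Finset.nonempty_iff_ne_empty.2 hzero)
    obtain ⟨u, hu, v, hv, huv⟩ := Finset.one_lt_card.1 (show 1 < (e ∩ S).card by omega)
    rw [Finset.mem_inter] at hu hv
    obtain ⟨k, f, hf⟩ := hT.exists_path u hu.2 v hv.2 huv
    obtain ⟨g, hg, x, hx, y, hy, hxg, hyg, hxy⟩ :=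
      exists_two_mem_of_path hTH h3 hnc he hu.1 k f v hv.1 huv hf
    refine ⟨x, hx, y, hy, ?_⟩
    simpa [hT.edge_subset g hg hxg, hT.edge_subset g hg hyg] using hc₁ g hg x hxg y hyg hxy

/-- If `H` is a 3-uniform hypergraph with no linear cycle, then `χ(H) ≤ 3`: the vertices
can be 3-colored so that no edge is monochromatic. -/
theorem chromatic_le_three (H : Finset (Finset V)) (h3 : ∀ e ∈ H, e.card = 3)
    (hnc : ¬ HasLinearCycle H) :
    ∃ c : V → Fin 3, ∀ e ∈ H, ∃ x ∈ e, ∃ y ∈ e, c x ≠ c y := by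
  obtain ⟨c, hc⟩ := exists_coloring_within h3 hnc Finset.univ
  exact ⟨c, fun e he => hc e he (Finset.subset_univ e)⟩
end

section
/- If H is a 3-uniform hypergraph on n vertices that contains no linear cycle, then α(H) ≥ 2n/5, i.e., H has an independent set of size at least 2n/5. -/
/-!
The bound is proved, by induction on the number of vertices, for hypergraphs whose edges have two
or three vertices. The gain from admitting pairs is a contraction: if all edges through a vertex
`a` are triples that pairwise meet only in `a`, then replacing each edge `{a, p, q}` by the pair
`{p, q}` and deleting `a` creates no linear cycle (`hasCyc_of_contract`), because two of the new
pairs on a cycle are disjoint, and two consecutive ones can be joined through `a` in the original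
hypergraph. An independent set of the contraction stays independent after adding `a`.

Hence it suffices to find vertex sets `I ⊆ W` with `I` nonempty and `2 |W| ≤ 5 |I|` such that every
edge meeting `I` contains a vertex of `W \ I` or has the form `{a} ∪ f` with `a ∈ I` and `f` in a
fixed family of pairwise disjoint pairs avoiding `I` (`Reducible`): delete `W \ I`, contract the
vertices of `I`, and add `I` to an independent set of what is left.

Such sets exist at the beginning of a longest linear path `e, q 0, q 1, …`, where `e` and `q 0`
share the vertex `w`. Let `g` be an edge that meets `e` only in a vertex `a ≠ w`. By maximality `g`
meets some later edge, and the first edge `q i` that it meets must contain two of its vertices, as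
otherwise a linear cycle closes. So `g = {a} ∪ (q i \ q (i - 1))`, with `{w}` in the role of
`q (-1)` (`IsStart.edge_cases_of_longest`), and the pairs `q i \ q (i - 1)` are pairwise disjoint.
The same classification applies to edges at vertices of `q 0`, except that these may also be first
edges of other longest paths. A short case analysis on the first edges at the vertices of `q 0`
(`reducible_of_card_two`, `reducible_of_two_starts`, `reducible_of_start`) then produces `W` and
`I`, the extreme ratio `2 / 5` being needed when `W` is the union of two edges.
-/

open Finset

variable {V : Type*} [Fintype V] [DecidableEq V]

section Mixed

variable {α : Type*} [DecidableEq α]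

/-! ### Linear paths and cycles -/

/-- The edges `q 0, …, q (n - 1)` form a linear path of `H`; values `q i` with `n ≤ i` are
irrelevant. -/
structure IsPath (H : Finset (Finset α)) (q : ℕ → Finset α) (n : ℕ) : Prop where
  mem : ∀ i, i < n → q i ∈ H
  adj : ∀ i, i + 1 < n → (q i ∩ q (i + 1)).card = 1
  disj : ∀ i j, i + 1 < j → j < n → Disjoint (q i) (q j)

/-- A linear cycle of length `n + 2`, cut open: a linear path `p 0, …, p n` together with a
closing edge `c`. -/
def HasCyc (H : Finset (Finset α)) : Prop :=
  ∃ (n : ℕ) (p : ℕ → Finset α) (c : Finset α), 1 ≤ n ∧ IsPath H p (n + 1) ∧ c ∈ H ∧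
    (c ∩ p 0).card = 1 ∧ (c ∩ p n).card = 1 ∧ ∀ i, 0 < i → i < n → Disjoint c (p i)

/-- Prepend a set to a sequence. -/
def consSeq (e : Finset α) (q : ℕ → Finset α) : ℕ → Finset α
  | 0 => e
  | i + 1 => q i

/-- A cut-open cycle is a linear cycle; edges of size at least two make its edges distinct. -/
theorem hasLinearCycle_of_hasCyc {H : Finset (Finset α)} [Fintype α] (h2 : ∀ e ∈ H, 2 ≤ e.card)
    (h : HasCyc H) : HasLinearCycle H := by
  obtain ⟨n, p, c, hn, hp, hc, h0, h1, hd⟩ := h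
  -- the cyclic sequence, indexed by the representatives `0, …, n + 1`
  obtain ⟨P, hP⟩ : ∃ P : ℕ → Finset α, P = fun i => if i < n + 1 then p i else c := ⟨_, rfl⟩
  have Pmem : ∀ i, P i ∈ H := by
    intro i
    rw [hP]; dsimp only
    split_ifs with hi
    · exact hp.mem i hi
    · exact hc
  have Padj : ∀ i, i < n + 1 → (P i ∩ P (i + 1)).card = 1 := by
    intro i hi
    rw [hP]; dsimp only
    rw [if_pos hi]
    split_ifs with hi'
    · exact hp.adj i hi'
    · have : i = n := by omega
      subst this
      rw [inter_comm]; exact h1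
  have Plast : (P (n + 1) ∩ P 0).card = 1 := by
    rw [hP]; simpa using h0
  have Pdisj : ∀ i j, i + 1 < j → j < n + 2 → ¬ (i = 0 ∧ j = n + 1) → Disjoint (P i) (P j) := by
    intro i j hij hj hne
    rw [hP]; dsimp only
    rw [if_pos (by omega)]
    split_ifs with hj'
    · exact hp.disj i j hij hj'
    · exact (hd i (by omega) (by omega)).symm
  have Pne : ∀ i j, i < j → j < n + 2 → P i ≠ P j := by
    intro i j hij hj heq
    have h2i := h2 _ (Pmem i)
    by_cases hs : j = i + 1
    · have := Padj i (by omega)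
      rw [← hs, ← heq, inter_self] at this
      omega
    · by_cases hl : i = 0 ∧ j = n + 1
      · have := Plast
        rw [← hl.2, ← hl.1, ← heq, inter_self] at this
        omega
      · have := Pdisj i j (by omega) hj hl
        rw [← heq, disjoint_self] at this
        rw [this] at h2i
        simp at h2i
  have hval : ∀ z : ZMod (n + 2), (z + 1).val = if z.val = n + 1 then 0 else z.val + 1 := by
    intro z
    have hz := ZMod.val_lt z
    have h1 : (1 : ZMod (n + 2)).val = 1 :=
      ZMod.val_one_eq_one_mod (n + 2) ▸ Nat.mod_eq_of_lt (by omega)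
    rw [ZMod.val_add, h1]
    split_ifs with h
    · rw [h]; simp
    · exact Nat.mod_eq_of_lt (by omega)
  refine ⟨n + 2, by omega, fun z => P z.val, ?_, fun z => Pmem _, ?_, ?_⟩
  · intro z z' hzz
    have hz := ZMod.val_lt z
    have hz' := ZMod.val_lt z'
    apply ZMod.val_injective
    rcases lt_trichotomy z.val z'.val with h | h | h
    · exact absurd hzz (Pne _ _ h hz')
    · exact h
    · exact absurd hzz.symm (Pne _ _ h hz)
  · intro z
    have hz := ZMod.val_lt z
    dsimp only
    rw [hval]
    split_ifs with h
    · rw [h]; exact Plast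
    · exact Padj _ (by omega)
  · have key : ∀ z z' : ZMod (n + 2), z.val < z'.val → z + 1 ≠ z' → z' + 1 ≠ z →
        Disjoint (P z.val) (P z'.val) := by
      intro z z' hlt h1 h2
      have hz' := ZMod.val_lt z'
      refine Pdisj _ _ ?_ hz' ?_
      · by_contra hcon
        apply h1
        apply ZMod.val_injective
        rw [hval, if_neg (by omega)]
        omega
      · rintro ⟨h3, h4⟩
        apply h2
        apply ZMod.val_injective
        rw [hval, if_pos h4, h3]
    intro z z' hne h1 h2
    rw [← disjoint_iff_inter_eq_empty]
    rcases lt_trichotomy z.val z'.val with h | h | h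
    · exact key _ _ h h1 h2
    · exact absurd (ZMod.val_injective _ h) hne
    · exact (key _ _ h h2 h1).symm

/-! ### Contracting a vertex -/

theorem erase_inter_erase (a : α) (e f : Finset α) :
    e.erase a ∩ f.erase a = (e ∩ f).erase a := by
  ext x; simp only [mem_inter, mem_erase]; tauto

theorem erase_inter_erase_of_not_both {a : α} {e f : Finset α} (h : ¬ (a ∈ e ∧ a ∈ f)) :
    e.erase a ∩ f.erase a = e ∩ f := by
  ext x; simp only [mem_inter, mem_erase]
  constructor
  · tauto
  · rintro ⟨h1, h2⟩
    have : x ≠ a := by rintro rfl; exact h ⟨h1, h2⟩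
    tauto

/-- If the edges at `a` pairwise meet only in `a`, then a linear path of length at least three
in the contraction of `a`, whose two end edges both come from edges at `a`, yields a linear cycle:
two successive such edges on the path are joined at `a`. -/
theorem hasCyc_of_contracted_path {H : Finset (Finset α)} {a : α}
    (h3 : ∀ e ∈ H, a ∈ e → e.card = 3)
    (hm : ∀ e ∈ H, ∀ f ∈ H, a ∈ e → a ∈ f → e ≠ f → e ∩ f = {a}) (n : ℕ) :
    ∀ P : ℕ → Finset α, (∀ i, i ≤ n → P i ∈ H) →
      (∀ i, i < n → ((P i).erase a ∩ (P (i + 1)).erase a).card = 1) →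
      (∀ i j, i + 1 < j → j ≤ n → Disjoint ((P i).erase a) ((P j).erase a)) →
      2 ≤ n → a ∈ P 0 → a ∈ P n → HasCyc H := by
  induction n using Nat.strong_induction_on with
  | _ n ih =>
    intro P hP hadj hdisj hn ha0 han
    have hne : ∀ i, i < n → a ∈ P i → a ∉ P (i + 1) := by
      intro i hi h1 h2
      have hc := hadj i hi
      by_cases he : P i = P (i + 1)
      · rw [← he, inter_self, card_erase_of_mem h1, h3 _ (hP i hi.le) h1] at hc
        omega
      · rw [erase_inter_erase, hm _ (hP i hi.le) _ (hP _ hi) h1 h2 he] at hc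
        simp at hc
    by_cases hex : ∃ i, 0 < i ∧ i < n ∧ a ∈ P i
    · obtain ⟨i, hi0, hin, hai⟩ := hex
      have hi1 : i ≠ 1 := by
        rintro rfl
        exact hne 0 (by omega) ha0 hai
      exact ih i hin P (fun j hj => hP j (by omega)) (fun j hj => hadj j (by omega))
        (fun j k hjk hk => hdisj j k hjk (by omega)) (by omega) ha0 hai
    · push Not at hex
      obtain ⟨k, rfl⟩ : ∃ k, n = k + 1 := ⟨n - 1, by omega⟩
      have hneq : P (k + 1) ≠ P 0 := by
        intro he
        have := hdisj 0 (k + 1) (by omega) le_rfl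
        rw [he, disjoint_self] at this
        have h4 := card_erase_of_mem ha0
        rw [h3 _ (hP 0 (by omega)) ha0] at h4
        simp only [bot_eq_empty] at this
        rw [this] at h4
        simp at h4
      refine ⟨k, P, P (k + 1), by omega, ⟨fun i hi => hP i (by omega), ?_, ?_⟩, hP _ le_rfl,
        ?_, ?_, ?_⟩
      · intro i hi
        rw [← erase_inter_erase_of_not_both (a := a)]
        · exact hadj i (by omega)
        · intro h; exact hex (i + 1) (by omega) (by omega) h.2
      · intro i j hij hj
        rw [disjoint_iff_inter_eq_empty, ← erase_inter_erase_of_not_both (a := a),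
          ← disjoint_iff_inter_eq_empty]
        · exact hdisj i j hij (by omega)
        · intro h; exact hex j (by omega) (by omega) h.2
      · rw [hm _ (hP _ le_rfl) _ (hP 0 (by omega)) han ha0 hneq]; simp
      · rw [inter_comm, ← erase_inter_erase_of_not_both (a := a)]
        · exact hadj k (by omega)
        · intro h; exact hex k (by omega) (by omega) h.1
      · intro i h0 hi
        rw [disjoint_comm, disjoint_iff_inter_eq_empty, ← erase_inter_erase_of_not_both (a := a),
          ← disjoint_iff_inter_eq_empty]
        · exact hdisj i (k + 1) (by omega) le_rfl
        · intro h; exact hex i h0 (by omega) h.1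

/-- Contracting a vertex whose edges are triples pairwise meeting only in that vertex creates no
linear cycle. -/
theorem hasCyc_of_contract {H : Finset (Finset α)} {a : α}
    (h3 : ∀ e ∈ H, a ∈ e → e.card = 3)
    (hm : ∀ e ∈ H, ∀ f ∈ H, a ∈ e → a ∈ f → e ≠ f → e ∩ f = {a})
    (h : HasCyc (H.image fun e => e.erase a)) : HasCyc H := by
  obtain ⟨n, p, c, hn, hp, hc, h0, h1, hd⟩ := h
  obtain ⟨C, hC, rfl⟩ := mem_image.1 hc
  have hex : ∀ i, ∃ e, i < n + 1 → e ∈ H ∧ e.erase a = p i := by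
    intro i
    by_cases hi : i < n + 1
    · obtain ⟨e, he, hep⟩ := mem_image.1 (hp.mem i hi)
      exact ⟨e, fun _ => ⟨he, hep⟩⟩
    · exact ⟨∅, fun h => absurd h hi⟩
  choose P hP using hex
  have hne : ∀ e ∈ H, ∀ f ∈ H, (e.erase a ∩ f.erase a).card = 1 → ¬ (a ∈ e ∧ a ∈ f) := by
    rintro e he f hf hc ⟨h1, h2⟩
    by_cases hef : e = f
    · rw [← hef, inter_self, card_erase_of_mem h1, h3 _ he h1] at hc
      omega
    · rw [erase_inter_erase, hm _ he _ hf h1 h2 hef] at hc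
      simp at hc
  have hadj : ∀ i, i < n → ((P i).erase a ∩ (P (i + 1)).erase a).card = 1 := by
    intro i hi
    rw [(hP i (by omega)).2, (hP (i + 1) (by omega)).2]
    exact hp.adj i (by omega)
  have hdisj : ∀ i j, i + 1 < j → j ≤ n → Disjoint ((P i).erase a) ((P j).erase a) := by
    intro i j hij hj
    rw [(hP i (by omega)).2, (hP j (by omega)).2]
    exact hp.disj i j hij (by omega)
  have hc0 : (C.erase a ∩ (P 0).erase a).card = 1 := by rw [(hP 0 (by omega)).2]; exact h0
  have hcn : (C.erase a ∩ (P n).erase a).card = 1 := by rw [(hP n (by omega)).2]; exact h1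
  have hcd : ∀ i, 0 < i → i < n → Disjoint (C.erase a) ((P i).erase a) := by
    intro i hi hin
    rw [(hP i (by omega)).2]
    exact hd i hi hin
  by_cases hA : a ∈ C ∧ ∃ i, i ≤ n ∧ a ∈ P i
  · obtain ⟨haC, i, hi, hai⟩ := hA
    have hi0 : i ≠ 0 := by
      rintro rfl
      exact hne _ hC _ (hP 0 (by omega)).1 hc0 ⟨haC, hai⟩
    have hin : i ≠ n := by
      rintro rfl
      exact hne _ hC _ (hP i (by omega)).1 hcn ⟨haC, hai⟩
    refine hasCyc_of_contracted_path h3 hm (i + 1) (consSeq C P) ?_ ?_ ?_ (by omega) haC hai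
    · rintro (_ | j) hj
      · exact hC
      · exact (hP j (by omega)).1
    · rintro (_ | j) hj
      · exact hc0
      · exact hadj j (by omega)
    · rintro (_ | j) (_ | k) hjk hk
      · omega
      · exact hcd k (by omega) (by omega)
      · omega
      · exact hdisj j k (by omega) (by omega)
  by_cases hB : ∃ i j, i < j ∧ j ≤ n ∧ a ∈ P i ∧ a ∈ P j
  · obtain ⟨i, j, hij, hj, hai, haj⟩ := hB
    have hij1 : j ≠ i + 1 := by
      rintro rfl
      exact hne _ (hP i (by omega)).1 _ (hP (i + 1) (by omega)).1 (hadj i (by omega)) ⟨hai, haj⟩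
    refine hasCyc_of_contracted_path h3 hm (j - i) (fun k => P (i + k)) ?_ ?_ ?_ (by omega)
      hai ?_
    · intro k hk
      exact (hP (i + k) (by omega)).1
    · intro k hk
      exact hadj (i + k) (by omega)
    · intro k l hkl hl
      exact hdisj (i + k) (i + l) (by omega) (by omega)
    · rwa [show i + (j - i) = j by omega]
  push Not at hA hB
  -- now at most one edge of the cycle comes from an edge at `a`, so the cycle lifts
  refine ⟨n, P, C, hn, ⟨fun i hi => (hP i hi).1, ?_, ?_⟩, hC, ?_, ?_, ?_⟩
  · intro i hi
    rw [← erase_inter_erase_of_not_both (a := a) fun h =>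
      hB i (i + 1) (by omega) (by omega) h.1 h.2]
    exact hadj i (by omega)
  · intro i j hij hj
    rw [disjoint_iff_inter_eq_empty, ← erase_inter_erase_of_not_both (a := a) fun h =>
      hB i j (by omega) (by omega) h.1 h.2, ← disjoint_iff_inter_eq_empty]
    exact hdisj i j hij (by omega)
  · rw [← erase_inter_erase_of_not_both (a := a) fun h => hA h.1 0 (by omega) h.2]
    exact hc0
  · rw [← erase_inter_erase_of_not_both (a := a) fun h => hA h.1 n (by omega) h.2]
    exact hcn
  · intro i hi hin
    rw [disjoint_iff_inter_eq_empty, ← erase_inter_erase_of_not_both (a := a) fun h =>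
      hA h.1 i (by omega) h.2, ← disjoint_iff_inter_eq_empty]
    exact hcd i hi hin

theorem HasCyc.mono {H K : Finset (Finset α)} (hHK : H ⊆ K) (h : HasCyc H) : HasCyc K := by
  obtain ⟨n, p, c, hn, hp, hc, h0, h1, hd⟩ := h
  exact ⟨n, p, c, hn, ⟨fun i hi => hHK (hp.mem i hi), hp.adj, hp.disj⟩, hHK hc, h0, h1, hd⟩

/-! ### Reducible configurations -/

/-- `I ⊆ W ⊆ U` witness that the vertex set `W` can be split off, putting `I` into the independent
set. An edge meeting `I` must either contain a vertex of `W \ I`, or be of the form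
`{a} ∪ f` with `a ∈ I` and `f` in a family `F` of pairwise disjoint pairs avoiding `I`; in the
latter case `f` becomes an edge of the smaller hypergraph. -/
def Reducible (U : Finset α) (H : Finset (Finset α)) : Prop :=
  ∃ (W I : Finset α) (F : Set (Finset α)), I ⊆ W ∧ I.Nonempty ∧ W ⊆ U ∧
    2 * W.card ≤ 5 * I.card ∧ (∀ f ∈ F, f.card = 2 ∧ Disjoint f I) ∧
    (∀ f ∈ F, ∀ g ∈ F, f ≠ g → Disjoint f g) ∧
    ∀ a ∈ I, ∀ e ∈ H, a ∈ e → (∃ x ∈ W, x ∉ I ∧ x ∈ e) ∨ ∃ f ∈ F, e = insert a f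

/-- Contracting, one after the other, all vertices of a set `J` whose edges have the form
`{a} ∪ f` with `f ∈ F` creates no linear cycle. -/
theorem not_hasCyc_contract_set {H : Finset (Finset α)} {F : Set (Finset α)} (I : Finset α)
    (hF : ∀ f ∈ F, f.card = 2 ∧ Disjoint f I) (hFd : ∀ f ∈ F, ∀ g ∈ F, f ≠ g → Disjoint f g)
    (hI : ∀ a ∈ I, ∀ e ∈ H, a ∈ e → ∃ f ∈ F, e = insert a f) (hH : ¬ HasCyc H)
    (J : Finset α) (hJ : J ⊆ I) : ¬ HasCyc (H.image fun e => e \ J) := by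
  induction J using Finset.induction_on with
  | empty => simpa using hH
  | insert a J haJ ih =>
    have haI : a ∈ I := hJ (mem_insert_self a J)
    have hJI : J ⊆ I := (subset_insert a J).trans hJ
    have himg : (H.image fun e => e \ insert a J) =
        ((H.image fun e => e \ J).image fun e => e.erase a) := by
      rw [image_image]
      congr 1
      ext e x
      simp only [Function.comp, mem_sdiff, mem_insert, mem_erase]
      tauto
    -- the edges at `a` are not affected by the earlier contractions
    have hedge : ∀ e ∈ H.image (fun e => e \ J), a ∈ e → ∃ f ∈ F, e = insert a f := by
      intro e he hae
      obtain ⟨e', he', rfl⟩ := mem_image.1 he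
      obtain ⟨f, hf, rfl⟩ := hI a haI e' he' (mem_sdiff.1 hae).1
      refine ⟨f, hf, ?_⟩
      rw [Finset.sdiff_eq_self_iff_disjoint, disjoint_insert_left]
      exact ⟨haJ, (hF f hf).2.mono_right hJI⟩
    have hnot : ∀ f ∈ F, a ∉ f := fun f hf haf => disjoint_left.1 (hF f hf).2 haf haI
    rw [himg]
    intro hcyc
    refine ih hJI (hasCyc_of_contract ?_ ?_ hcyc)
    · intro e he hae
      obtain ⟨f, hf, rfl⟩ := hedge e he hae
      rw [card_insert_of_notMem (hnot f hf), (hF f hf).1]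
    · intro e he e' he' hae hae' hne
      obtain ⟨f, hf, rfl⟩ := hedge e he hae
      obtain ⟨g, hg, rfl⟩ := hedge e' he' hae'
      have hfg : f ≠ g := by rintro rfl; exact hne rfl
      rw [← insert_inter_distrib, disjoint_iff_inter_eq_empty.1 (hFd f hf g hg hfg)]
      rfl

/-! ### Longest paths and their first edges -/

/-- The pairs `q i \ q (i - 1)` for `i < n`, where `q (-1)` is understood as `{w}`. -/
def tailPairs (w : α) (q : ℕ → Finset α) (n : ℕ) : Set (Finset α) :=
  {f | f.card = 2 ∧ ∃ i, i < n ∧ f = q i \ consSeq {w} q i}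

theorem tailPairs_disjoint {H : Finset (Finset α)} {q : ℕ → Finset α} {n : ℕ}
    (hq : IsPath H q n) (w : α) :
    ∀ f ∈ tailPairs w q n, ∀ g ∈ tailPairs w q n, f ≠ g → Disjoint f g := by
  have key : ∀ i j, i < j → j < n →
      Disjoint (q i \ consSeq {w} q i) (q j \ consSeq {w} q j) := by
    intro i j hij hj
    by_cases h : j = i + 1
    · subst h
      exact disjoint_sdiff.mono_left sdiff_subset
    · exact (hq.disj i j (by omega) hj).mono sdiff_subset sdiff_subset
  rintro f ⟨-, i, hi, rfl⟩ g ⟨-, j, hj, rfl⟩ hne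
  rcases lt_trichotomy i j with h | h | h
  · exact key i j h hj
  · subst h; exact absurd rfl hne
  · exact (key j i h hi).symm

/-- `e` is an edge that can be put in front of the linear path `q 0, …, q (n - 1)`, meeting it
only in the vertex `w` of `q 0`. For the empty path, `w` is any vertex of `e`. -/
structure IsStart (H : Finset (Finset α)) (q : ℕ → Finset α) (n : ℕ) (w : α)
    (e : Finset α) : Prop where
  mem : e ∈ H
  memw : w ∈ e
  head : 0 < n → w ∈ q 0
  inter : ∀ i, i < n → ∀ x ∈ e, x ∈ q i → x = w
  tail : ∀ i, 0 < i → i < n → w ∉ q i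

theorem IsStart.isPath {H : Finset (Finset α)} {q : ℕ → Finset α} {n : ℕ} {w : α} {e : Finset α}
    (hq : IsPath H q n) (h : IsStart H q n w e) : IsPath H (consSeq e q) (n + 1) := by
  refine ⟨?_, ?_, ?_⟩
  · rintro (_ | i) hi
    · exact h.mem
    · exact hq.mem i (by omega)
  · rintro (_ | i) hi
    · rw [card_eq_one]
      refine ⟨w, ?_⟩
      ext x
      simp only [consSeq, mem_inter, mem_singleton]
      constructor
      · rintro ⟨h1, h2⟩
        exact h.inter 0 (by omega) x h1 h2
      · rintro rfl
        exact ⟨h.memw, h.head (by omega)⟩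
    · exact hq.adj i (by omega)
  · rintro (_ | i) (_ | j) hij hj
    · omega
    · rw [disjoint_left]
      intro x hx hxj
      have := h.inter j (by omega) x hx hxj
      subst this
      exact h.tail j (by omega) (by omega) hxj
    · omega
    · exact hq.disj i j (by omega) (by omega)

/-- An edge meeting the first edge of a linear path only in a vertex `a` outside the second edge
either misses the rest of the path, or consists of `a` and a pair of the form
`q i \ q (i - 1)`: it closes no cycle with the first edge `q i` that it meets. -/
theorem IsStart.edge_cases {H : Finset (Finset α)} {q : ℕ → Finset α} {n : ℕ} {w : α}
    {e : Finset α} (h23 : ∀ e ∈ H, 2 ≤ e.card ∧ e.card ≤ 3) (hcyc : ¬ HasCyc H)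
    (hq : IsPath H q n) (h : IsStart H q n w e) {a : α} (hae : a ∈ e) (haw : a ≠ w)
    {g : Finset α} (hg : g ∈ H) (hge : g ∩ e = {a}) :
    (∀ i, i < n → Disjoint g (q i)) ∨ ∃ f ∈ tailPairs w q n, g = insert a f := by
  classical
  by_cases hall : ∀ i, i < n → Disjoint g (q i)
  · exact Or.inl hall
  right
  have hex : ∃ i, i < n ∧ ¬ Disjoint g (q i) := by push Not at hall; exact hall
  obtain ⟨i, ⟨hin, hi⟩, hmin⟩ : ∃ i, (i < n ∧ ¬ Disjoint g (q i)) ∧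
      ∀ j, j < i → Disjoint g (q j) := by
    refine ⟨Nat.find hex, Nat.find_spec hex, fun j hj => ?_⟩
    by_contra hcon
    exact Nat.find_min hex hj ⟨hj.trans (Nat.find_spec hex).1, hcon⟩
  have hag : a ∈ g := (mem_inter.1 (hge ▸ mem_singleton_self a)).1
  have haq : a ∉ q i := fun haq => haw (h.inter i hin a hae haq)
  have hwg : w ∉ g := by
    intro hwg
    have : w ∈ g ∩ e := mem_inter.2 ⟨hwg, h.memw⟩
    rw [hge, mem_singleton] at this
    exact haw this.symm
  have hpath := h.isPath hq
  have hne1 : (g ∩ q i).card ≠ 1 := by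
    intro h1
    refine hcyc ⟨i + 1, consSeq e q, g, by omega,
      ⟨fun j hj => hpath.mem j (by omega), fun j hj => hpath.adj j (by omega),
        fun j k hjk hk => hpath.disj j k hjk (by omega)⟩, hg, ?_, h1, ?_⟩
    · change (g ∩ e).card = 1
      rw [hge]; simp
    · rintro (_ | j) hj hji
      · omega
      · exact hmin j (by omega)
  have hne0 : (g ∩ q i).card ≠ 0 := by
    rw [Ne, card_eq_zero, ← disjoint_iff_inter_eq_empty]; exact hi
  have hsub : g ∩ q i ⊆ g.erase a := by
    intro x hx
    rw [mem_inter] at hx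
    exact mem_erase.2 ⟨by rintro rfl; exact haq hx.2, hx.1⟩
  have hgc := (h23 g hg).2
  have hec := card_erase_of_mem hag
  have heq : g ∩ q i = g.erase a := eq_of_subset_of_card_le hsub (by omega)
  have hcard : (g.erase a).card = 2 := by rw [heq] at hne0 hne1; omega
  have hprev : Disjoint g (consSeq {w} q i) ∧ ∃ x, x ∈ q i ∧ x ∈ consSeq {w} q i := by
    rcases i with _ | i
    · exact ⟨disjoint_singleton_right.2 hwg, w, h.head (by omega), mem_singleton_self w⟩
    · refine ⟨hmin i (by omega), ?_⟩
      have := hq.adj i hin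
      obtain ⟨x, hx⟩ := card_pos.1 (this ▸ Nat.one_pos)
      exact ⟨x, (mem_inter.1 hx).2, (mem_inter.1 hx).1⟩
  obtain ⟨hdis, x, hxq, hxp⟩ := hprev
  have hfin : g.erase a = q i \ consSeq {w} q i := by
    refine eq_of_subset_of_card_le ?_ ?_
    · intro y hy
      have hy' : y ∈ g ∩ q i := heq ▸ hy
      rw [mem_inter] at hy'
      exact mem_sdiff.2 ⟨hy'.2, disjoint_left.1 hdis hy'.1⟩
    · rw [hcard]
      have h1 : q i \ consSeq {w} q i ⊆ (q i).erase x := by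
        intro y hy
        rw [mem_sdiff] at hy
        exact mem_erase.2 ⟨by rintro rfl; exact hy.2 hxp, hy.1⟩
      have h2 := card_le_card h1
      rw [card_erase_of_mem hxq] at h2
      have := (h23 _ (hq.mem i hin)).2
      omega
  exact ⟨g.erase a, ⟨hcard, i, hin, hfin⟩, (insert_erase hag).symm⟩

theorem eq_insert_pair_of_card_eq_three {e : Finset α} {w : α} (hw : w ∈ e) (h : e.card = 3) :
    ∃ a b, a ≠ w ∧ b ≠ w ∧ a ≠ b ∧ e = {w, a, b} := by
  have h2 : (e.erase w).card = 2 := by rw [card_erase_of_mem hw, h]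
  obtain ⟨a, b, hab, he⟩ := card_eq_two.1 h2
  have ha : a ∈ e.erase w := by rw [he]; simp
  have hb : b ∈ e.erase w := by rw [he]; simp
  exact ⟨a, b, (mem_erase.1 ha).1, (mem_erase.1 hb).1, hab, by rw [← he, insert_erase hw]⟩

theorem IsStart.tailPairs_disjoint {H : Finset (Finset α)} {q : ℕ → Finset α} {n : ℕ} {w : α}
    {e : Finset α} (h : IsStart H q n w e) {f : Finset α} (hf : f ∈ tailPairs w q n) :
    Disjoint f e := by
  obtain ⟨-, i, hi, rfl⟩ := hf
  rw [disjoint_left]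
  intro x hx hxe
  rw [mem_sdiff] at hx
  have := h.inter i hi x hxe hx.1
  subst this
  rcases i with _ | i
  · exact hx.2 (mem_singleton_self x)
  · exact h.tail (i + 1) (by omega) hi hx.1

/-- In a longest path, every edge through a vertex `a` of the first edge meets the first edge
again or consists of `a` and one of the pairs `q i \ q (i - 1)`. -/
theorem IsStart.edge_cases_of_longest {H : Finset (Finset α)} {q : ℕ → Finset α} {n : ℕ} {w : α}
    {e : Finset α} (h23 : ∀ e ∈ H, 2 ≤ e.card ∧ e.card ≤ 3) (hcyc : ¬ HasCyc H)
    (hq : IsPath H q n) (hmax : ∀ p, ¬ IsPath H p (n + 2)) (h : IsStart H q n w e) {a : α}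
    (hae : a ∈ e) (haw : a ≠ w) {g : Finset α} (hg : g ∈ H) (hag : a ∈ g) :
    (∃ x ∈ e, x ≠ a ∧ x ∈ g) ∨ ∃ f ∈ tailPairs w q n, g = insert a f := by
  by_cases hx : ∃ x ∈ e, x ≠ a ∧ x ∈ g
  · exact Or.inl hx
  right
  push Not at hx
  have hge : g ∩ e = {a} := by
    ext x
    simp only [mem_inter, mem_singleton]
    constructor
    · rintro ⟨h1, h2⟩
      by_contra hne
      exact hx x h2 hne h1
    · rintro rfl
      exact ⟨hag, hae⟩
  rcases h.edge_cases h23 hcyc hq hae haw hg hge with hd | hf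
  · exfalso
    refine hmax _ (IsStart.isPath (w := a) (e := g) (h.isPath hq) ⟨hg, hag, fun _ => hae, ?_, ?_⟩)
    · rintro (_ | i) hi x hxg hxq
      · have : x ∈ g ∩ e := mem_inter.2 ⟨hxg, hxq⟩
        rw [hge, mem_singleton] at this
        exact this
      · exact absurd hxq (disjoint_left.1 (hd i (by omega)) hxg)
    · rintro (_ | i) h0 hi haq
      · omega
      · exact haw (h.inter i (by omega) a hae haq)
  · exact hf

/-- A longest path starting with an edge `{a, w}` of size two gives the configuration
`W = {a, w}`, `I = {a}`. -/
theorem reducible_of_card_two {U : Finset α} {H : Finset (Finset α)} {q : ℕ → Finset α} {n : ℕ}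
    {w : α} {e : Finset α} (hU : ∀ e ∈ H, e ⊆ U)
    (h23 : ∀ e ∈ H, 2 ≤ e.card ∧ e.card ≤ 3) (hcyc : ¬ HasCyc H)
    (hq : IsPath H q n) (hmax : ∀ p, ¬ IsPath H p (n + 2)) (h : IsStart H q n w e)
    (he : e.card = 2) : Reducible U H := by
  obtain ⟨a, ha⟩ : ∃ a, e.erase w = {a} :=
    card_eq_one.1 (by rw [card_erase_of_mem h.memw, he])
  have hae : a ∈ e.erase w := by rw [ha]; exact mem_singleton_self a
  obtain ⟨haw, hae⟩ := mem_erase.1 hae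
  refine ⟨e, {a}, tailPairs w q n, singleton_subset_iff.2 hae, ⟨a, mem_singleton_self a⟩,
    hU e h.mem, by rw [he]; simp, ?_, tailPairs_disjoint hq w, ?_⟩
  · intro f hf
    exact ⟨hf.1, (h.tailPairs_disjoint hf).mono_right (singleton_subset_iff.2 hae)⟩
  · intro a' ha' g hg hag
    rw [mem_singleton] at ha'
    subst ha'
    rcases h.edge_cases_of_longest h23 hcyc hq hmax hae haw hg hag with ⟨x, hx, hxa, hxg⟩ | hf
    · exact Or.inl ⟨x, hx, by simpa using hxa, hxg⟩
    · exact Or.inr hf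

/-- Two different first edges `e`, `e'` at the same vertex `w` give the configuration
`W = e ∪ e'`, `I = {b, d}` with `b ∈ e \ e'` and `d ∈ e' \ e`; here `W` has at most five vertices. -/
theorem reducible_of_two_starts {U : Finset α} {H : Finset (Finset α)} {q : ℕ → Finset α} {n : ℕ}
    {w : α} {e e' : Finset α} (hU : ∀ e ∈ H, e ⊆ U)
    (h23 : ∀ e ∈ H, 2 ≤ e.card ∧ e.card ≤ 3) (hcyc : ¬ HasCyc H)
    (hq : IsPath H q n) (hmax : ∀ p, ¬ IsPath H p (n + 2)) (h : IsStart H q n w e)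
    (h' : IsStart H q n w e') (hee : e ≠ e') : Reducible U H := by
  by_cases he2 : e.card = 2
  · exact reducible_of_card_two hU h23 hcyc hq hmax h he2
  by_cases he2' : e'.card = 2
  · exact reducible_of_card_two hU h23 hcyc hq hmax h' he2'
  have he : e.card = 3 := by have := h23 e h.mem; omega
  have he' : e'.card = 3 := by have := h23 e' h'.mem; omega
  have hsub : e ∪ e' ⊆ U := union_subset (hU e h.mem) (hU e' h'.mem)
  obtain ⟨b, hbe, hbe'⟩ : ∃ b ∈ e, b ∉ e' := by
    by_contra hcon
    push Not at hcon
    exact hee (eq_of_subset_of_card_le hcon (by omega))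
  obtain ⟨d, hde', hde⟩ : ∃ d ∈ e', d ∉ e := by
    by_contra hcon
    push Not at hcon
    exact hee (eq_of_subset_of_card_le hcon (by omega)).symm
  have hcard : 2 * (e ∪ e').card ≤ 10 := by
    have h1 := card_union_add_card_inter e e'
    have h2 : 0 < (e ∩ e').card := card_pos.2 ⟨w, mem_inter.2 ⟨h.memw, h'.memw⟩⟩
    omega
  have hbw : b ≠ w := by rintro rfl; exact hbe' h'.memw
  have hdw : d ≠ w := by rintro rfl; exact hde h.memw
  have hbd : b ≠ d := by rintro rfl; exact hde hbe
  refine ⟨e ∪ e', {b, d}, tailPairs w q n, ?_, ⟨b, by simp⟩, hsub, ?_, ?_,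
    tailPairs_disjoint hq w, ?_⟩
  · intro x hx
    rw [mem_insert, mem_singleton] at hx
    rcases hx with rfl | rfl
    · exact mem_union_left _ hbe
    · exact mem_union_right _ hde'
  · rw [card_pair hbd]
    exact hcard
  · intro f hf
    refine ⟨hf.1, ?_⟩
    rw [disjoint_insert_right, disjoint_singleton_right]
    exact ⟨fun hb => disjoint_left.1 (h.tailPairs_disjoint hf) hb hbe,
      fun hd => disjoint_left.1 (h'.tailPairs_disjoint hf) hd hde'⟩
  · intro a ha g hg hag
    rw [mem_insert, mem_singleton] at ha
    rcases ha with rfl | rfl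
    · rcases h.edge_cases_of_longest h23 hcyc hq hmax hbe hbw hg hag with
        ⟨x, hx, hxa, hxg⟩ | hf
      · refine Or.inl ⟨x, mem_union_left _ hx, ?_, hxg⟩
        rw [mem_insert, mem_singleton]
        rintro (rfl | rfl)
        · exact hxa rfl
        · exact hde hx
      · exact Or.inr hf
    · rcases h'.edge_cases_of_longest h23 hcyc hq hmax hde' hdw hg hag with
        ⟨x, hx, hxa, hxg⟩ | hf
      · refine Or.inl ⟨x, mem_union_right _ hx, ?_, hxg⟩
        rw [mem_insert, mem_singleton]
        rintro (rfl | rfl)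
        · exact hbe' hx
        · exact hxa rfl
      · exact Or.inr hf

/-! ### Every nonempty hypergraph without linear cycles is reducible -/

/-- When the tail has length `m + 1` and its first edge `q 0` is joined to the rest at `u`, the
edges at a vertex `a ≠ w` of a first edge `e` are classified by the pairs beyond `q 0`. -/
theorem IsStart.edge_cases_beyond {H : Finset (Finset α)} {q : ℕ → Finset α} {m : ℕ} {w u : α}
    {e : Finset α} (h23 : ∀ e ∈ H, 2 ≤ e.card ∧ e.card ≤ 3) (hcyc : ¬ HasCyc H)
    (hq : IsPath H q (m + 1)) (hmax : ∀ p, ¬ IsPath H p (m + 1 + 2))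
    (h : IsStart H q (m + 1) w e) (hu : IsStart H (fun i => q (i + 1)) m u (q 0)) (huw : u ≠ w)
    {a : α} (hae : a ∈ e) (haw : a ≠ w) {g : Finset α}
    (hg : g ∈ H) (hag : a ∈ g) :
    (∃ x ∈ e, x ≠ a ∧ x ∈ g) ∨ u ∈ g ∨
      ∃ f ∈ tailPairs u (fun i => q (i + 1)) m, g = insert a f := by
  rcases h.edge_cases_of_longest h23 hcyc hq hmax hae haw hg hag with
    hx | ⟨f, ⟨hf2, i, hi, hf⟩, hgf⟩
  · exact Or.inl hx
  right
  rcases i with _ | i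
  · left
    have : u ∈ f := by
      rw [hf, mem_sdiff]
      exact ⟨hu.memw, by simpa [consSeq] using huw⟩
    rw [hgf]
    exact mem_insert_of_mem this
  · right
    refine ⟨f, ⟨hf2, i, by omega, ?_⟩, hgf⟩
    rw [hf]
    rcases i with _ | i
    · ext x
      simp only [consSeq, mem_sdiff, mem_singleton]
      constructor
      · rintro ⟨h1, h2⟩
        refine ⟨h1, ?_⟩
        rintro rfl
        exact h2 hu.memw
      · rintro ⟨h1, h2⟩
        exact ⟨h1, fun h3 => h2 (hu.inter 0 (by omega) x h3 h1)⟩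
    · rfl

/-- The edges at a vertex `x ≠ u` of `q 0`: those meeting `q 0` only in `x` are first edges at `x`
or consist of `x` and a pair beyond `q 0`. -/
theorem edge_cases_second {H : Finset (Finset α)} {q : ℕ → Finset α} {m : ℕ} {u : α}
    (h23 : ∀ e ∈ H, 2 ≤ e.card ∧ e.card ≤ 3) (hcyc : ¬ HasCyc H)
    (hq' : IsPath H (fun i => q (i + 1)) m)
    (hu : IsStart H (fun i => q (i + 1)) m u (q 0)) {x : α} (hx : x ∈ q 0) (hxu : x ≠ u)
    {g : Finset α} (hg : g ∈ H) (hxg : x ∈ g) :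
    (∃ y ∈ q 0, y ≠ x ∧ y ∈ g) ∨ IsStart H q (m + 1) x g ∨
      ∃ f ∈ tailPairs u (fun i => q (i + 1)) m, g = insert x f := by
  by_cases hy : ∃ y ∈ q 0, y ≠ x ∧ y ∈ g
  · exact Or.inl hy
  right
  push Not at hy
  have hge : g ∩ q 0 = {x} := by
    ext y
    simp only [mem_inter, mem_singleton]
    constructor
    · rintro ⟨h1, h2⟩
      by_contra hne
      exact hy y h2 hne h1
    · rintro rfl
      exact ⟨hxg, hx⟩
  rcases hu.edge_cases h23 hcyc hq' hx hxu hg hge with hd | hf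
  · left
    refine ⟨hg, hxg, fun _ => hx, ?_, ?_⟩
    · rintro (_ | i) hi y hyg hyq
      · by_contra hne
        exact hy y hyq hne hyg
      · exact absurd hyq (disjoint_left.1 (hd i (by omega)) hyg)
    · rintro (_ | i) h0 hi hxq
      · omega
      · exact hxu (hu.inter i (by omega) x hx hxq)
  · exact Or.inr hf

/-- A longest path with at least two edges, with first edge `e`, second edge `q 0` meeting `e` in
`w`, and `u` the vertex of `q 0` joining it to the rest (if there is any), gives a reducible
configuration. By the two preceding reductions, `e = {w, a, b}` and first edges at a given vertex
are unique. If `q 0 = {w, u}`, take `W = {w, u, a, b}` and `I = {w, a}`. Otherwise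
`q 0 = {u, w, v}`. If no first edge at `v` avoids `b`, take `W = {u, v, w, a, b}` and
`I = {v, a}`; else there is a first edge `{v, c, d}`, disjoint from `{w, a, b}`, and
`W = {u, v, w, a, b, c, d}`, `I = {v, a, c}` works, since `3 / 7 > 2 / 5`. -/
theorem reducible_of_start {U : Finset α} {H : Finset (Finset α)} {q : ℕ → Finset α} {m : ℕ}
    {w u : α} {e : Finset α} (hU : ∀ e ∈ H, e ⊆ U)
    (h23 : ∀ e ∈ H, 2 ≤ e.card ∧ e.card ≤ 3) (hcyc : ¬ HasCyc H)
    (hq : IsPath H q (m + 1)) (hmax : ∀ p, ¬ IsPath H p (m + 1 + 2))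
    (hu : IsStart H (fun i => q (i + 1)) m u (q 0)) (huw : u ≠ w)
    (h : IsStart H q (m + 1) w e) : Reducible U H := by
  by_contra hred
  have hcard3 : ∀ x e, IsStart H q (m + 1) x e → e.card = 3 := by
    intro x e he
    by_contra h3
    have := h23 e he.mem
    exact hred (reducible_of_card_two hU h23 hcyc hq hmax he (by omega))
  have huniq : ∀ x e e', IsStart H q (m + 1) x e → IsStart H q (m + 1) x e' → e = e' := by
    intro x e e' he he'
    by_contra hne
    exact hred (reducible_of_two_starts hU h23 hcyc hq hmax he he' hne)
  have hq' : IsPath H (fun i => q (i + 1)) m :=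
    ⟨fun i hi => hq.mem _ (by omega), fun i hi => hq.adj _ (by omega),
      fun i j hij hj => hq.disj _ _ (by omega) (by omega)⟩
  have hq0 : q 0 ∈ H := hq.mem 0 (by omega)
  have hFd := tailPairs_disjoint hq' u
  have hF0 : ∀ f ∈ tailPairs u (fun i => q (i + 1)) m, ∀ x ∈ q 0, x ∉ f := fun f hf x hx hxf =>
    disjoint_left.1 (hu.tailPairs_disjoint hf) hxf hx
  have hFe : ∀ f ∈ tailPairs u (fun i => q (i + 1)) m, ∀ x e, IsStart H q (m + 1) x e →
      ∀ y ∈ e, y ∉ f := by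
    rintro f ⟨-, i, hi, rfl⟩ x e he y hy hyf
    have hyq := (mem_sdiff.1 hyf).1
    have := he.inter (i + 1) (by omega) y hy hyq
    subst this
    exact he.tail (i + 1) (by omega) (by omega) hyq
  have hnq0 : ∀ x e, IsStart H q (m + 1) x e → ∀ y ∈ e, y ≠ x → y ∉ q 0 :=
    fun x e he y hy hyx hyq => hyx (he.inter 0 (by omega) y hy hyq)
  obtain ⟨a, b, haw, hbw, hab, he⟩ := eq_insert_pair_of_card_eq_three h.memw (hcard3 w e h)
  have hae : a ∈ e := by rw [he]; simp
  have hbe : b ∈ e := by rw [he]; simp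
  have hwq : w ∈ q 0 := h.head (by omega)
  have haq := hnq0 w e h a hae haw
  have hbq := hnq0 w e h b hbe hbw
  have hbU : b ∈ U := hU e h.mem hbe
  have haU : a ∈ U := hU e h.mem hae
  have hq0U : ∀ x ∈ q 0, x ∈ U := fun x hx => hU _ hq0 hx
  have huq : u ∈ q 0 := hu.memw
  have hau : a ≠ u := by rintro rfl; exact haq huq
  have hbu : b ≠ u := by rintro rfl; exact hbq huq
  -- the edges at `a`
  have hEa : ∀ g ∈ H, a ∈ g → b ∈ g ∨ w ∈ g ∨ u ∈ g ∨
      ∃ f ∈ tailPairs u (fun i => q (i + 1)) m, g = insert a f := by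
    intro g hg hag
    rcases h.edge_cases_beyond h23 hcyc hq hmax hu huw hae haw hg hag with
      ⟨x, hx, hxa, hxg⟩ | hug | hf
    · rw [he] at hx
      simp only [mem_insert, mem_singleton] at hx
      rcases hx with rfl | rfl | rfl
      · exact Or.inr (Or.inl hxg)
      · exact absurd rfl hxa
      · exact Or.inl hxg
    · exact Or.inr (Or.inr (Or.inl hug))
    · exact Or.inr (Or.inr (Or.inr hf))
  have hc0 := h23 _ hq0
  by_cases hc2 : (q 0).card = 2
  · -- here `q 0 = {w, u}`
    have hq0e : q 0 = {w, u} := by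
      refine (eq_of_subset_of_card_le ?_ ?_).symm
      · intro x hx
        rw [mem_insert, mem_singleton] at hx
        rcases hx with rfl | rfl
        · exact hwq
        · exact huq
      · rw [card_pair huw.symm, hc2]
    have hEw : ∀ g ∈ H, w ∈ g → u ∈ g ∨ b ∈ g ∨
        ∃ f ∈ tailPairs u (fun i => q (i + 1)) m, g = insert w f := by
      intro g hg hwg
      rcases edge_cases_second h23 hcyc hq' hu hwq huw.symm hg hwg with
        ⟨y, hy, hyw, hyg⟩ | hs | hf
      · rw [hq0e, mem_insert, mem_singleton] at hy
        rcases hy with rfl | rfl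
        · exact absurd rfl hyw
        · exact Or.inl hyg
      · rw [huniq w g e hs h]
        exact Or.inr (Or.inl hbe)
      · exact Or.inr (Or.inr hf)
    refine hred ⟨{w, u, a, b}, {w, a}, tailPairs u (fun i => q (i + 1)) m, ?_, ⟨w, by simp⟩, ?_,
      ?_, ?_, hFd, ?_⟩
    · intro x hx
      simp only [mem_insert, mem_singleton] at hx ⊢
      tauto
    · intro x hx
      simp only [mem_insert, mem_singleton] at hx
      rcases hx with rfl | rfl | rfl | rfl
      · exact hq0U _ hwq
      · exact hq0U _ huq
      · exact haU
      · exact hbU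
    · rw [card_pair haw.symm]
      have := card_le_four (a := w) (b := u) (c := a) (d := b)
      omega
    · intro f hf
      refine ⟨hf.1, ?_⟩
      rw [disjoint_insert_right, disjoint_singleton_right]
      exact ⟨hF0 f hf w hwq, hFe f hf w e h a hae⟩
    · have hbI : b ∉ ({w, a} : Finset α) := by simp [hbw, hab.symm]
      have huI : u ∉ ({w, a} : Finset α) := by simp [huw, hau.symm]
      intro x hx g hg hxg
      rw [mem_insert, mem_singleton] at hx
      rcases hx with rfl | rfl
      · rcases hEw g hg hxg with h1 | h1 | h1
        · exact Or.inl ⟨u, by simp, huI, h1⟩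
        · exact Or.inl ⟨b, by simp, hbI, h1⟩
        · exact Or.inr h1
      · rcases hEa g hg hxg with h1 | h1 | h1 | h1
        · exact Or.inl ⟨b, by simp, hbI, h1⟩
        · rcases hEw g hg h1 with h2 | h2 | ⟨f, hf, hgf⟩
          · exact Or.inl ⟨u, by simp, huI, h2⟩
          · exact Or.inl ⟨b, by simp, hbI, h2⟩
          · exfalso
            rw [hgf, mem_insert] at hxg
            exact hxg.elim haw (hFe f hf w e h x hae)
        · exact Or.inl ⟨u, by simp, huI, h1⟩
        · exact Or.inr h1
  -- now `q 0 = {u, w, v}`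
  obtain ⟨v, hvu, hvw, hq0e⟩ : ∃ v, v ≠ u ∧ v ≠ w ∧ q 0 = {u, w, v} := by
    obtain ⟨x, y, hxu, hyu, hxy, hxe⟩ := eq_insert_pair_of_card_eq_three huq
      (show (q 0).card = 3 by omega)
    have hw' := hwq
    rw [hxe] at hw'
    simp only [mem_insert, mem_singleton] at hw'
    rcases hw' with rfl | rfl | rfl
    · exact absurd rfl huw
    · exact ⟨y, hyu, hxy.symm, hxe⟩
    · exact ⟨x, hxu, hxy, by rw [hxe, pair_comm]⟩
  have hvq : v ∈ q 0 := by rw [hq0e]; simp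
  have hav : a ≠ v := by rintro rfl; exact haq hvq
  have hbv : b ≠ v := by rintro rfl; exact hbq hvq
  -- the edges at `v`
  have hEv : ∀ g ∈ H, v ∈ g → u ∈ g ∨ w ∈ g ∨ IsStart H q (m + 1) v g ∨
      ∃ f ∈ tailPairs u (fun i => q (i + 1)) m, g = insert v f := by
    intro g hg hvg
    rcases edge_cases_second h23 hcyc hq' hu hvq hvu hg hvg with
      ⟨y, hy, hyv, hyg⟩ | hs | hf
    · rw [hq0e] at hy
      simp only [mem_insert, mem_singleton] at hy
      rcases hy with rfl | rfl | rfl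
      · exact Or.inl hyg
      · exact Or.inr (Or.inl hyg)
      · exact absurd rfl hyv
    · exact Or.inr (Or.inr (Or.inl hs))
    · exact Or.inr (Or.inr (Or.inr hf))
  by_cases hsv : ∀ g, IsStart H q (m + 1) v g → b ∈ g
  · -- there is no first edge at `v`, or it is `{v, a, b}`
    have hbI : b ∉ ({v, a} : Finset α) := by simp [hbv, hab.symm]
    have huI : u ∉ ({v, a} : Finset α) := by simp [hvu.symm, hau.symm]
    have hwI : w ∉ ({v, a} : Finset α) := by simp [hvw.symm, haw.symm]
    refine hred ⟨{u, v, w, a, b}, {v, a}, tailPairs u (fun i => q (i + 1)) m, ?_, ⟨v, by simp⟩,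
      ?_, ?_, ?_, hFd, ?_⟩
    · intro x hx
      simp only [mem_insert, mem_singleton] at hx ⊢
      tauto
    · intro x hx
      simp only [mem_insert, mem_singleton] at hx
      rcases hx with rfl | rfl | rfl | rfl | rfl
      · exact hq0U _ huq
      · exact hq0U _ hvq
      · exact hq0U _ hwq
      · exact haU
      · exact hbU
    · rw [card_pair hav.symm]
      have := card_le_five (a := u) (b := v) (c := w) (d := a) (e := b)
      omega
    · intro f hf
      refine ⟨hf.1, ?_⟩
      rw [disjoint_insert_right, disjoint_singleton_right]
      exact ⟨hF0 f hf v hvq, hFe f hf w e h a hae⟩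
    · intro x hx g hg hxg
      rw [mem_insert, mem_singleton] at hx
      rcases hx with rfl | rfl
      · rcases hEv g hg hxg with h1 | h1 | h1 | h1
        · exact Or.inl ⟨u, by simp, huI, h1⟩
        · exact Or.inl ⟨w, by simp, hwI, h1⟩
        · exact Or.inl ⟨b, by simp, hbI, hsv g h1⟩
        · exact Or.inr h1
      · rcases hEa g hg hxg with h1 | h1 | h1 | h1
        · exact Or.inl ⟨b, by simp, hbI, h1⟩
        · exact Or.inl ⟨w, by simp, hwI, h1⟩
        · exact Or.inl ⟨u, by simp, huI, h1⟩
        · exact Or.inr h1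
  -- a first edge `{v, c, d}` at `v`, which is then disjoint from `{w, a, b}`
  push Not at hsv
  obtain ⟨e', h', hbe'⟩ := hsv
  have hwe' : w ∉ e' := fun hw' => hvw (h'.inter 0 (by omega) w hw' hwq).symm
  have hue' : u ∉ e' := fun hu' => hvu (h'.inter 0 (by omega) u hu' huq).symm
  have hae' : a ∉ e' := by
    intro ha'
    rcases hEa e' h'.mem ha' with h1 | h1 | h1 | ⟨f, hf, hgf⟩
    · exact hbe' h1
    · exact hwe' h1
    · exact hue' h1
    · have := h'.memw
      rw [hgf, mem_insert] at this
      exact this.elim hav.symm (hF0 f hf v hvq)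
  obtain ⟨c, d, hcv, hdv, hcd, hce⟩ := eq_insert_pair_of_card_eq_three h'.memw (hcard3 v e' h')
  have hce' : c ∈ e' := by rw [hce]; simp
  have hde' : d ∈ e' := by rw [hce]; simp
  have hcq := hnq0 v e' h' c hce' hcv
  have hdq := hnq0 v e' h' d hde' hdv
  have hac : a ≠ c := by rintro rfl; exact hae' hce'
  have had : a ≠ d := by rintro rfl; exact hae' hde'
  have hbc : b ≠ c := by rintro rfl; exact hbe' hce'
  have huc : u ≠ c := by rintro rfl; exact hue' hce'
  have hwc : w ≠ c := by rintro rfl; exact hwe' hce'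
  have hbI : b ∉ ({v, a, c} : Finset α) := by simp [hbv, hab.symm, hbc]
  have huI : u ∉ ({v, a, c} : Finset α) := by simp [hvu.symm, hau.symm, huc]
  have hwI : w ∉ ({v, a, c} : Finset α) := by simp [hvw.symm, haw.symm, hwc]
  have hdI : d ∉ ({v, a, c} : Finset α) := by simp [hdv, had.symm, hcd.symm]
  refine hred ⟨q 0 ∪ {a, b, c, d}, {v, a, c}, tailPairs u (fun i => q (i + 1)) m, ?_,
    ⟨v, by simp⟩, ?_, ?_, ?_, hFd, ?_⟩
  · intro x hx
    simp only [mem_insert, mem_singleton] at hx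
    rcases hx with rfl | rfl | rfl
    · exact mem_union_left _ hvq
    · simp
    · simp
  · refine union_subset (hU _ hq0) ?_
    intro x hx
    simp only [mem_insert, mem_singleton] at hx
    rcases hx with rfl | rfl | rfl | rfl
    · exact haU
    · exact hbU
    · exact hU _ h'.mem hce'
    · exact hU _ h'.mem hde'
  · have h3 : ({v, a, c} : Finset α).card = 3 :=
      card_eq_three.2 ⟨v, a, c, hav.symm, hcv.symm, hac, rfl⟩
    have h4 := card_le_four (a := a) (b := b) (c := c) (d := d)
    have h5 := card_union_le (q 0) {a, b, c, d}
    omega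
  · intro f hf
    refine ⟨hf.1, ?_⟩
    rw [disjoint_insert_right, disjoint_insert_right, disjoint_singleton_right]
    exact ⟨hF0 f hf v hvq, hFe f hf w e h a hae, hFe f hf v e' h' c hce'⟩
  · have hEv' : ∀ g ∈ H, v ∈ g → (∃ x ∈ q 0 ∪ {a, b, c, d}, x ∉ ({v, a, c} : Finset α) ∧ x ∈ g) ∨
        ∃ f ∈ tailPairs u (fun i => q (i + 1)) m, g = insert v f := by
      intro g hg hvg
      rcases hEv g hg hvg with h1 | h1 | h1 | h1
      · exact Or.inl ⟨u, mem_union_left _ huq, huI, h1⟩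
      · exact Or.inl ⟨w, mem_union_left _ hwq, hwI, h1⟩
      · refine Or.inl ⟨d, by simp, hdI, ?_⟩
        rw [huniq v g e' h1 h']
        exact hde'
      · exact Or.inr h1
    intro x hx g hg hxg
    simp only [mem_insert, mem_singleton] at hx
    rcases hx with rfl | rfl | rfl
    · exact hEv' g hg hxg
    · rcases hEa g hg hxg with h1 | h1 | h1 | h1
      · exact Or.inl ⟨b, by simp, hbI, h1⟩
      · exact Or.inl ⟨w, mem_union_left _ hwq, hwI, h1⟩
      · exact Or.inl ⟨u, mem_union_left _ huq, huI, h1⟩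
      · exact Or.inr h1
    · rcases h'.edge_cases_beyond h23 hcyc hq hmax hu hvu.symm hce' hcv hg hxg with
        ⟨y, hy, hyc, hyg⟩ | h1 | h1
      · rw [hce] at hy
        simp only [mem_insert, mem_singleton] at hy
        rcases hy with rfl | rfl | rfl
        · rcases hEv' g hg hyg with h2 | ⟨f, hf, hgf⟩
          · exact Or.inl h2
          · exfalso
            rw [hgf, mem_insert] at hxg
            exact hxg.elim hcv (hFe f hf _ e' h' x hce')
        · exact absurd rfl hyc
        · exact Or.inl ⟨y, by simp, hdI, hyg⟩
      · exact Or.inl ⟨u, mem_union_left _ huq, huI, h1⟩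
      · exact Or.inr h1

/-- If no two edges meet in exactly one vertex, so that longest paths are single edges, any edge
yields a reducible configuration. -/
theorem reducible_of_short {U : Finset α} {H : Finset (Finset α)} (hU : ∀ e ∈ H, e ⊆ U)
    (h23 : ∀ e ∈ H, 2 ≤ e.card ∧ e.card ≤ 3) (hcyc : ¬ HasCyc H)
    (hmax : ∀ p, ¬ IsPath H p 2) {e : Finset α} (he : e ∈ H) : Reducible U H := by
  by_contra hred
  have hstart : ∀ x e, e ∈ H → x ∈ e → IsStart H (fun _ => ∅) 0 x e := fun x e he hx =>
    ⟨he, hx, by simp, by simp, by simp⟩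
  have hq : IsPath H (fun _ => ∅) 0 := ⟨by simp, by simp, by simp⟩
  have he3 : e.card = 3 := by
    have := h23 e he
    obtain ⟨x, hx⟩ : e.Nonempty := card_pos.1 (by omega)
    by_contra hne
    exact hred (reducible_of_card_two hU h23 hcyc hq hmax (hstart x e he hx) (by omega))
  obtain ⟨w, hw⟩ : e.Nonempty := card_pos.1 (by omega)
  obtain ⟨a, b, haw, hbw, hab, hee⟩ := eq_insert_pair_of_card_eq_three hw he3
  have hae : a ∈ e := by rw [hee]; simp
  have hbe : b ∈ e := by rw [hee]; simp
  refine hred ⟨{a, b}, {a}, ∅, by simp, by simp, ?_, ?_, by simp, by simp, ?_⟩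
  · intro x hx
    rw [mem_insert, mem_singleton] at hx
    rcases hx with rfl | rfl
    · exact hU e he hae
    · exact hU e he hbe
  · rw [card_pair hab]; simp
  · intro x hx g hg hxg
    rw [mem_singleton] at hx
    subst hx
    refine Or.inl ⟨b, by simp, by simpa using hab.symm, ?_⟩
    rcases (hstart w e he hw).edge_cases_of_longest h23 hcyc hq hmax hae haw hg hxg with
      ⟨y, hy, hya, hyg⟩ | ⟨f, ⟨-, i, hi, -⟩, -⟩
    · rw [hee] at hy
      simp only [mem_insert, mem_singleton] at hy
      rcases hy with rfl | rfl | rfl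
      · -- `g` and `e` are both first edges at `y`, hence equal
        by_contra hbg
        refine hred (reducible_of_two_starts hU h23 hcyc hq hmax (hstart y e he hw)
          (hstart y g hg hyg) ?_)
        rintro rfl
        exact hbg hbe
      · exact absurd rfl hya
      · exact hyg
    · omega

theorem IsPath.length_le {H : Finset (Finset α)} {q : ℕ → Finset α} {n : ℕ}
    (h2 : ∀ e ∈ H, 2 ≤ e.card) (hq : IsPath H q n) : n ≤ H.card := by
  have hne : ∀ i j, i < j → j < n → q i ≠ q j := by
    intro i j hij hj heq
    have hc := h2 _ (hq.mem i (by omega))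
    by_cases h : j = i + 1
    · subst h
      have := hq.adj i hj
      rw [← heq, inter_self] at this
      omega
    · have := hq.disj i j (by omega) hj
      rw [← heq, disjoint_self, bot_eq_empty] at this
      rw [this] at hc
      simp at hc
  rw [← card_range n]
  refine card_le_card_of_injOn q (fun i hi => hq.mem i (by simpa using hi)) ?_
  intro i hi j hj hij
  simp only [coe_range, Set.mem_Iio] at hi hj
  rcases lt_trichotomy i j with h | h | h
  · exact absurd hij (hne i j h hj)
  · exact h
  · exact absurd hij.symm (hne j i h hi)

/-- A hypergraph with edges of sizes two and three, at least one edge and no linear cycle has a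
reducible configuration, found at the beginning of a longest linear path. -/
theorem reducible_of_nonempty {U : Finset α} {H : Finset (Finset α)} (hU : ∀ e ∈ H, e ⊆ U)
    (h23 : ∀ e ∈ H, 2 ≤ e.card ∧ e.card ≤ 3) (hcyc : ¬ HasCyc H) (hne : H.Nonempty) :
    Reducible U H := by
  classical
  obtain ⟨e, he⟩ := hne
  have hex : ∃ n, ∀ p, ¬ IsPath H p (n + 2) :=
    ⟨H.card, fun p hp => by have := hp.length_le fun e he => (h23 e he).1; omega⟩
  obtain ⟨n, hmax, hmin⟩ : ∃ n, (∀ p, ¬ IsPath H p (n + 2)) ∧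
      ∀ j, j < n → ∃ p, IsPath H p (j + 2) := by
    refine ⟨Nat.find hex, Nat.find_spec hex, fun j hj => ?_⟩
    have := Nat.find_min hex hj
    push Not at this
    exact this
  rcases n with _ | m
  · exact reducible_of_short hU h23 hcyc hmax he
  obtain ⟨p, hp⟩ := hmin m (by omega)
  have hpq : IsPath H (fun i => p (i + 1)) (m + 1) :=
    ⟨fun i hi => hp.mem _ (by omega), fun i hi => hp.adj _ (by omega),
      fun i j hij hj => hp.disj _ _ (by omega) (by omega)⟩
  -- the first edge of a path is a first edge for the rest of the path
  have hfirst : ∀ (q : ℕ → Finset α) (k : ℕ), IsPath H q (k + 2) →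
      ∃ x, x ∈ q 1 ∧ IsStart H (fun i => q (i + 1)) (k + 1) x (q 0) := by
    intro q k hq
    obtain ⟨x, hx⟩ := card_eq_one.1 (hq.adj 0 (by omega))
    have hx' : x ∈ q 0 ∩ q 1 := by rw [hx]; exact mem_singleton_self x
    rw [mem_inter] at hx'
    refine ⟨x, hx'.2, hq.mem 0 (by omega), hx'.1, fun _ => hx'.2, ?_, ?_⟩
    · rintro (_ | i) hi y hy hyq
      · have : y ∈ q 0 ∩ q 1 := mem_inter.2 ⟨hy, hyq⟩
        rw [hx, mem_singleton] at this
        exact this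
      · exact absurd hyq (disjoint_left.1 (hq.disj 0 (i + 2) (by omega) (by omega)) hy)
    · intro i h0 hi hxq
      exact disjoint_left.1 (hq.disj 0 (i + 1) (by omega) (by omega)) hx'.1 hxq
  obtain ⟨w, hw1, hw⟩ := hfirst p m hp
  obtain ⟨u, huw, hu⟩ : ∃ u, u ≠ w ∧
      IsStart H (fun i => p (i + 2)) m u (p 1) := by
    rcases m with _ | m
    · -- the second edge is the last one, and `u` is any of its other vertices
      have hc := (h23 _ (hp.mem 1 (by omega))).1
      obtain ⟨u, hu, huw⟩ := exists_mem_ne (by omega : 1 < (p 1).card) w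
      exact ⟨u, huw, hp.mem 1 (by omega), hu, by simp, by simp, by simp⟩
    · obtain ⟨u, hu2, hu⟩ := hfirst (fun i => p (i + 1)) m hpq
      refine ⟨u, ?_, hu⟩
      rintro rfl
      exact hw.tail 1 (by omega) (by omega) hu2
  exact reducible_of_start hU h23 hcyc hpq hmax hu huw hw

/-! ### The bound -/

/-- The bound for hypergraphs with edges of sizes two and three on the vertex set `U`. -/
theorem exists_indep_of_mixed (n : ℕ) : ∀ (U : Finset α) (H : Finset (Finset α)), U.card = n →
    (∀ e ∈ H, e ⊆ U) → (∀ e ∈ H, 2 ≤ e.card ∧ e.card ≤ 3) → ¬ HasCyc H →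
    ∃ S ⊆ U, (∀ e ∈ H, ¬ e ⊆ S) ∧ 2 * U.card ≤ 5 * S.card := by
  induction n using Nat.strong_induction_on with
  | _ n ih =>
    intro U H hn hU h23 hcyc
    rcases H.eq_empty_or_nonempty with rfl | hne
    · exact ⟨U, Subset.rfl, by simp, by omega⟩
    obtain ⟨W, I, F, hIW, hI, hWU, hcard, hF, hFd, hred⟩ := reducible_of_nonempty hU h23 hcyc hne
    -- `K` consists of the edges avoiding `W \ I`
    obtain ⟨K, hK⟩ : ∃ K, K = H.filter fun e => Disjoint e (W \ I) := ⟨_, rfl⟩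
    have hKI : ∀ a ∈ I, ∀ e ∈ K, a ∈ e → ∃ f ∈ F, e = insert a f := by
      intro a ha e he hae
      rw [hK, mem_filter] at he
      rcases hred a ha e he.1 hae with ⟨x, hx, hxI, hxe⟩ | hf
      · exact absurd (mem_sdiff.2 ⟨hx, hxI⟩) (disjoint_left.1 he.2 hxe)
      · exact hf
    have hKcyc : ¬ HasCyc K := fun h => hcyc (h.mono (hK ▸ filter_subset _ _))
    have hK' := not_hasCyc_contract_set I hF hFd hKI hKcyc I Subset.rfl
    have hWpos : 0 < W.card := card_pos.2 (hI.mono hIW)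
    have hUW : (U \ W).card = U.card - W.card := card_sdiff_of_subset hWU
    have hWle := card_le_card hWU
    obtain ⟨S, hSU, hS, hScard⟩ := ih (U \ W).card (by omega) (U \ W) (K.image fun e => e \ I) rfl
      (by
        intro e he
        obtain ⟨e', he', rfl⟩ := mem_image.1 he
        rw [hK, mem_filter] at he'
        intro x hx
        rw [mem_sdiff] at hx ⊢
        refine ⟨hU e' he'.1 hx.1, fun hxW => ?_⟩
        exact disjoint_left.1 he'.2 hx.1 (mem_sdiff.2 ⟨hxW, hx.2⟩))
      (by
        intro e he
        obtain ⟨e', he', rfl⟩ := mem_image.1 he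
        have he'H : e' ∈ H := by rw [hK, mem_filter] at he'; exact he'.1
        refine ⟨?_, (card_le_card sdiff_subset).trans (h23 e' he'H).2⟩
        by_cases hdis : Disjoint e' I
        · rw [Finset.sdiff_eq_self_of_disjoint hdis]
          exact (h23 e' he'H).1
        · obtain ⟨a, hae, haI⟩ := not_disjoint_iff.1 hdis
          obtain ⟨f, hf, rfl⟩ := hKI a haI e' he' hae
          rw [← (hF f hf).1]
          refine card_le_card fun x hx => mem_sdiff.2 ⟨mem_insert_of_mem hx, ?_⟩
          exact disjoint_left.1 (hF f hf).2 hx)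
      hK'
    have hSW : Disjoint S W := disjoint_of_subset_left hSU sdiff_disjoint
    refine ⟨S ∪ I, union_subset (hSU.trans sdiff_subset) (hIW.trans hWU), ?_, ?_⟩
    · intro e he hesub
      have heK : e ∈ K := by
        rw [hK, mem_filter]
        refine ⟨he, disjoint_left.2 fun x hx hxW => ?_⟩
        rw [mem_sdiff] at hxW
        rcases mem_union.1 (hesub hx) with h | h
        · exact disjoint_left.1 hSW h hxW.1
        · exact hxW.2 h
      refine hS _ (mem_image_of_mem _ heK) fun x hx => ?_
      rw [mem_sdiff] at hx
      exact (mem_union.1 (hesub hx.1)).resolve_right hx.2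
    · rw [card_union_of_disjoint (hSW.mono_right hIW)]
      omega

end Mixed

/-- If `H` is a 3-uniform hypergraph on `n` vertices with no linear cycle, then
`α(H) ≥ 2n/5`. -/
theorem alpha_ge_two_fifths (H : Finset (Finset V)) (h3 : ∀ e ∈ H, e.card = 3)
    (hnc : ¬ HasLinearCycle H) :
    2 * Fintype.card V ≤ 5 * indepNum H := by
  obtain ⟨S, -, hS, hcard⟩ := exists_indep_of_mixed _ univ H rfl (fun e _ => subset_univ e)
    (fun e he => by rw [h3 e he]; omega)
    (fun h => hnc (hasLinearCycle_of_hasCyc (fun e he => by rw [h3 e he]; omega) h))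
  have hle : S.card ≤ indepNum H :=
    le_sup (f := Finset.card) (mem_filter.2 ⟨mem_univ S, hS⟩)
  rw [card_univ] at hcard
  omega
end

section
/- Let H be a 3-uniform hypergraph with no linear cycle and let T be a linear subtree of H. Let v ∈ V(T) and let f = {v,a,b} ∈ E(H) be an edge such that {a,b} intersects V(T) but neither a nor b belongs to any edge of T containing v. Then the hypergraph obtained from T by replacing the unique edge of T containing both a and b by f (a 'swap') is again a linear tree, and it has the same vertex set V(T). -/
/-!
The tree `T` can be rebuilt starting from an edge through `v` (`IsLinearTree.rooted`), so that `v`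
is a vertex of every intermediate tree; the theorem is then proved by induction along this
construction. Let `g` be the last edge, added to `T'`, and `f = {v, a, b}`.

* If `{a, b}` meets `V(T')`, the swap in `T'` preserves `V(T')`, so `g` may still be added after it.
* Otherwise both `a` and `b` are new vertices of `g`, so `g` is the edge to replace, and
  `f` meets `V(T')` in `v` only: adding `f` to `T'` instead of `g` gives the swapped tree.

In the second case `a` and `b` are both vertices of `T`: if, say, only `a` were, then the linear
path of `T` from `v` to `a` (`LinearTreeFrom.exists_path`), which has at least two edges because no edge
of `T` contains both `v` and `a`, would be closed by `f` to a linear cycle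
(`LinearTreeFrom.both_mem_verts`).
-/

open Finset

variable {V : Type*} [Fintype V] [DecidableEq V]

/-- The vertex set of a set of edges. -/
def verts (T : Finset (Finset V)) : Finset V := T.sup id

/-- A linear subtree of `H`: obtained from a single edge of `H` by repeatedly adding an
edge of `H` that intersects the set of vertices used so far in exactly one vertex. -/
inductive IsLinearTree (H : Finset (Finset V)) : Finset (Finset V) → Prop
  | single (e : Finset V) (he : e ∈ H) : IsLinearTree H {e}
  | extend (T : Finset (Finset V)) (e : Finset V) (hT : IsLinearTree H T)
      (he : e ∈ H) (hcap : (e ∩ verts T).card = 1) : IsLinearTree H (insert e T)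

lemma mem_verts {T : Finset (Finset V)} {x : V} : x ∈ verts T ↔ ∃ e ∈ T, x ∈ e := by
  simp [verts, Finset.mem_sup]

lemma verts_insert (T : Finset (Finset V)) (e : Finset V) :
    verts (insert e T) = e ∪ verts T := by
  simp [verts]

/-- Linear trees built up from an initial edge containing the root `v`. -/
inductive LinearTreeFrom (H : Finset (Finset V)) (v : V) : Finset (Finset V) → Prop
  | single (e : Finset V) (he : e ∈ H) (hv : v ∈ e) : LinearTreeFrom H v {e}
  | extend (T : Finset (Finset V)) (e : Finset V) (hT : LinearTreeFrom H v T)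
      (he : e ∈ H) (hcap : (e ∩ verts T).card = 1) : LinearTreeFrom H v (insert e T)

section

variable {H T : Finset (Finset V)} {v : V}

lemma LinearTreeFrom.isLinearTree (h : LinearTreeFrom H v T) : IsLinearTree H T := by
  induction h with
  | single e he _ => exact .single e he
  | extend T e _ he hcap ih => exact .extend T e ih he hcap

lemma LinearTreeFrom.root_mem (h : LinearTreeFrom H v T) : v ∈ verts T := by
  induction h with
  | single e _ hv => simpa [verts] using hv
  | extend T e _ _ _ ih => rw [verts_insert]; exact mem_union_right _ ih

lemma LinearTreeFrom.subset (h : LinearTreeFrom H v T) : T ⊆ H := by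
  induction h with
  | single e he _ => simpa using he
  | extend T e _ he _ ih => exact insert_subset he ih

/-- A tree rooted at `x` may be hung below an edge `e` which meets it in `x` only, so that the
result is rooted at any vertex of `e`. -/
lemma LinearTreeFrom.hang {x : V} {e : Finset V} (h : LinearTreeFrom H x T) (he : e ∈ H) (hv : v ∈ e)
    (hx : e ∩ verts T = {x}) : LinearTreeFrom H v (insert e T) := by
  induction h with
  | single g hg hxg =>
    rw [Finset.pair_comm]
    refine .extend _ g (.single e he hv) hg ?_
    have : g ∩ verts {e} = {x} := by simpa [verts, inter_comm] using hx
    simp [this]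
  | extend T g hT hg hcap ih =>
    have hxT := hT.root_mem
    rw [verts_insert] at hx
    have hxe : x ∈ e := (mem_inter.1 (hx ▸ mem_singleton_self x)).1
    have hsub : ∀ y ∈ e, y ∈ g ∪ verts T → y = x := fun y hy hy' =>
      mem_singleton.1 (hx ▸ mem_inter.2 ⟨hy, hy'⟩)
    rw [Finset.insert_comm]
    refine .extend _ g (ih ?_) hg ?_
    · ext y
      simp only [mem_inter, mem_singleton]
      exact ⟨fun h => hsub y h.1 (mem_union_right _ h.2), by rintro rfl; exact ⟨hxe, hxT⟩⟩
    · have : g ∩ verts (insert e T) = g ∩ verts T := by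
        ext y
        simp only [verts_insert, mem_inter, mem_union]
        refine ⟨fun ⟨hyg, h⟩ => ⟨hyg, h.elim (fun hye => ?_) id⟩, fun h => ⟨h.1, .inr h.2⟩⟩
        rwa [hsub y hye (mem_union_left _ hyg)]
      rw [this, hcap]

/-- A linear tree can be built up starting from an edge through any prescribed vertex. -/
lemma IsLinearTree.rooted (h : IsLinearTree H T) (hv : v ∈ verts T) : LinearTreeFrom H v T := by
  induction h generalizing v with
  | single e he => exact .single e he (by simpa [verts] using hv)
  | extend T e _ he hcap ih =>
    by_cases hvT : v ∈ verts T
    · exact .extend T e (ih hvT) he hcap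
    · rw [verts_insert, mem_union] at hv
      obtain ⟨x, hx⟩ := card_eq_one.1 hcap
      have hxT : x ∈ verts T := (mem_inter.1 (hx ▸ mem_singleton_self x)).2
      exact (ih hxT).hang he (hv.resolve_right hvT) hx

/-- In a rooted tree every vertex `x` other than the root `v` is reached from `v` by a linear path
`p 0, …, p n`, in which only `p 0` contains `v` and only `p n` contains `x`. -/
lemma LinearTreeFrom.exists_path (h : LinearTreeFrom H v T) {x : V} (hx : x ∈ verts T) (hxv : x ≠ v) :
    ∃ (n : ℕ) (p : ℕ → Finset V), (∀ i ≤ n, p i ∈ T) ∧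
      (∀ i ≤ n, v ∈ p i ↔ i = 0) ∧ (∀ i ≤ n, x ∈ p i ↔ i = n) ∧
      (∀ i < n, (p i ∩ p (i + 1)).card = 1) ∧
      (∀ i j, i + 1 < j → j ≤ n → p i ∩ p j = ∅) := by
  induction h generalizing x with
  | single e he hv =>
    have hxe : x ∈ e := by simpa [verts] using hx
    refine ⟨0, fun _ => e, ?_, ?_, ?_, ?_, ?_⟩ <;> grind
  | extend T g hT hg hcap ih =>
    by_cases hxT : x ∈ verts T
    · obtain ⟨n, p, h1, h2⟩ := ih hxT hxv
      exact ⟨n, p, fun i hi => mem_insert_of_mem (h1 i hi), h2⟩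
    · have hxg : x ∈ g := by
        rw [verts_insert, mem_union] at hx
        exact hx.resolve_right hxT
      obtain ⟨w, hw⟩ := card_eq_one.1 hcap
      have hgT : ∀ y, y ∈ g → y ∈ verts T → y = w := fun y h h' =>
        mem_singleton.1 (hw ▸ mem_inter.2 ⟨h, h'⟩)
      obtain ⟨hwg, hwT⟩ := mem_inter.1 (hw ▸ mem_singleton_self w)
      by_cases hwv : w = v
      · subst hwv
        refine ⟨0, fun _ => g, ?_, ?_, ?_, ?_, ?_⟩ <;> grind
      · obtain ⟨n, p, h1, h2, h3, h4, h5⟩ := ih hwT hwv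
        have hpT : ∀ i ≤ n, ∀ y ∈ p i, y ∈ verts T := fun i hi y hy =>
          mem_verts.2 ⟨_, h1 i hi, hy⟩
        have hvT := hT.root_mem
        refine ⟨n + 1, fun i => if i ≤ n then p i else g, ?_, ?_, ?_, ?_, ?_⟩
        · grind
        · grind
        · grind
        · intro i hi
          rcases Nat.lt_succ_iff_lt_or_eq.1 hi with hi | rfl
          · simpa [hi.le, Nat.succ_le_of_lt hi] using h4 i hi
          · simp only [le_refl, if_true, Nat.not_succ_le_self, if_false]
            refine card_eq_one.2 ⟨w, ?_⟩
            ext y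
            grind
        · intro i j hij hj
          rcases Nat.le_succ_iff.1 hj with hj | rfl
          · simpa [hj, show i ≤ n by omega] using h5 i j hij hj
          · have hi : i ≤ n := by omega
            simp only [hi, if_true, Nat.not_succ_le_self, if_false]
            rw [← disjoint_iff_inter_eq_empty, disjoint_left]
            intro y hy hyg
            have := hgT y hyg (hpT i hi y hy)
            grind

/-- Linear cycles indexed by natural numbers instead of `ZMod k`. Distinctness of the edges is
automatic, since they have three vertices each. -/
lemma hasLinearCycle_of_nat (h3 : ∀ e ∈ H, e.card = 3) (m : ℕ) (hm : 2 ≤ m) (p : ℕ → Finset V)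
    (hp : ∀ i ≤ m, p i ∈ H) (hcons : ∀ i < m, (p i ∩ p (i + 1)).card = 1)
    (hlast : (p m ∩ p 0).card = 1)
    (hdisj : ∀ i j, i + 1 < j → j ≤ m → ¬ (i = 0 ∧ j = m) → p i ∩ p j = ∅) :
    HasLinearCycle H := by
  have hinj : ∀ i j, i < j → j ≤ m → p i ≠ p j := by
    intro i j hij hj heq
    have hc := h3 _ (hp j hj)
    rcases Nat.lt_or_ge (i + 1) j with h | h
    · by_cases h' : i = 0 ∧ j = m
      · obtain ⟨rfl, rfl⟩ := h'
        rw [heq, inter_self] at hlast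
        omega
      · have := hdisj i j h hj h'
        rw [heq, inter_self] at this
        simp [this] at hc
    · obtain rfl : j = i + 1 := by omega
      have := hcons i (by omega)
      rw [heq, inter_self] at this
      omega
  have hval : ∀ i : ZMod (m + 1), i.val ≤ m := fun i => Nat.lt_succ_iff.1 (ZMod.val_lt i)
  have hsucc : ∀ i : ZMod (m + 1), (i + 1).val = if i.val = m then 0 else i.val + 1 := by
    intro i
    have : Fact (1 < m + 1) := ⟨by omega⟩
    rw [ZMod.val_add, ZMod.val_one]
    have := hval i
    split_ifs with h
    · simp [h]
    · exact Nat.mod_eq_of_lt (by omega)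
  have hne : ∀ i j : ZMod (m + 1), i ≠ j → i.val ≠ j.val := fun i j h h' =>
    h (ZMod.val_injective _ h')
  refine ⟨m + 1, by omega, fun i => p i.val, ?_, fun i => hp _ (hval i), ?_, ?_⟩
  · intro i j hij
    by_contra hne'
    rcases Nat.lt_or_gt_of_ne (hne i j hne') with h | h
    · exact hinj _ _ h (hval j) hij
    · exact hinj _ _ h (hval i) hij.symm
  · intro i
    simp only [hsucc]
    have := hval i
    split_ifs with h
    · rw [h]; exact hlast
    · exact hcons _ (by omega)
  · intro i j h1 h2 h4
    have h1 := hne _ _ h1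
    have h2 := hne _ _ h2
    have h4 := hne _ _ h4
    rw [hsucc] at h2 h4
    have hi := hval i
    have hj := hval j
    rcases Nat.lt_or_gt_of_ne h1 with h | h
    · exact hdisj _ _ (by grind) hj (by grind)
    · simp only [inter_comm (p i.val)]
      exact hdisj _ _ (by grind) hi (by grind)

/-- If `b` were not a vertex of `T`, the edge `{v, a, b}` would close the path of `T` from `v`
to `a` to a linear cycle. -/
lemma LinearTreeFrom.both_mem_verts (h3 : ∀ e ∈ H, e.card = 3) (hnc : ¬ HasLinearCycle H)
    (h : LinearTreeFrom H v T) {a b : V} (hva : v ≠ a)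
    (hf : ({v, a, b} : Finset V) ∈ H) (ha : a ∈ verts T)
    (hstar : ∀ e ∈ T, v ∈ e → a ∉ e) : b ∈ verts T := by
  by_contra hb
  obtain ⟨n, p, h1, h2, h4, h5, h6⟩ := h.exists_path ha hva.symm
  have hbp : ∀ i ≤ n, b ∉ p i := fun i hi hbi => hb (mem_verts.2 ⟨_, h1 i hi, hbi⟩)
  have hn : n ≠ 0 := fun hn =>
    hstar _ (h1 0 (by omega)) ((h2 0 (by omega)).2 rfl) ((h4 0 (by omega)).2 hn.symm)
  have hva' : ∀ i ≤ n, ∀ y, y ∈ p i ∩ {v, a, b} ↔ (y = v ∧ i = 0 ∨ y = a ∧ i = n) := by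
    intro i hi y
    have := hbp i hi
    have := h2 i hi
    have := h4 i hi
    simp only [mem_inter, mem_insert, mem_singleton]
    grind
  refine hnc (hasLinearCycle_of_nat h3 (n + 1) (by omega)
    (fun i => if i ≤ n then p i else {v, a, b}) ?_ ?_ ?_ ?_)
  · intro i _
    split_ifs with hi
    · exact h.subset (h1 i hi)
    · exact hf
  · intro i hi
    rcases Nat.lt_succ_iff_lt_or_eq.1 hi with hi | rfl
    · simpa [hi.le, Nat.succ_le_of_lt hi] using h5 i hi
    · simp only [le_refl, if_true, Nat.not_succ_le_self, if_false]
      refine card_eq_one.2 ⟨a, ?_⟩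
      ext y
      rw [hva' i le_rfl, mem_singleton]
      simp [hn]
  · simp only [Nat.not_succ_le_self, if_false, Nat.zero_le, if_true]
    rw [inter_comm]
    refine card_eq_one.2 ⟨v, ?_⟩
    ext y
    rw [hva' 0 (by omega), mem_singleton]
    simp [hn.symm]
  · intro i j hij hj hne
    rcases Nat.le_succ_iff.1 hj with hj | rfl
    · simpa [hj, show i ≤ n by omega] using h6 i j hij hj
    · have hi : i ≤ n := by omega
      simp only [hi, if_true, Nat.not_succ_le_self, if_false]
      ext y
      rw [hva' i hi]
      simp only [notMem_empty, iff_false]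
      omega

end

/-- Swap lemma: if `H` has no linear cycle, `T` is a linear subtree, `v ∈ V(T)` and
`f = {v,a,b} ∈ E(H)` is such that `{a,b}` meets `V(T)` but does not meet the star of `T`
at `v`, then replacing the unique edge of `T` containing both `a` and `b` by `f` yields
again a linear tree, with the same vertex set `V(T)`. -/
theorem swap_isLinearTree (H T : Finset (Finset V)) (h3 : ∀ e ∈ H, e.card = 3)
    (hnc : ¬ HasLinearCycle H) (hT : IsLinearTree H T)
    (v a b : V) (hv : v ∈ verts T)
    (hab : a ≠ b) (hva : v ≠ a) (hvb : v ≠ b)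
    (hf : ({v, a, b} : Finset V) ∈ H)
    (hmeet : a ∈ verts T ∨ b ∈ verts T)
    (hstar : ∀ e ∈ T, v ∈ e → a ∉ e ∧ b ∉ e) :
    ∃ e₀ ∈ T, a ∈ e₀ ∧ b ∈ e₀ ∧ (∀ e ∈ T, a ∈ e → b ∈ e → e = e₀) ∧
      IsLinearTree H (insert ({v, a, b} : Finset V) (T.erase e₀)) ∧
      verts (insert ({v, a, b} : Finset V) (T.erase e₀)) = verts T := by
  have hr := hT.rooted hv
  clear hT hv
  induction hr with
  | single e he hve =>
    have := hstar e (mem_singleton_self e) hve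
    simp [verts] at hmeet
    tauto
  | extend T g hT hg hcap ih =>
    have hvT := hT.root_mem
    obtain ⟨w, hw⟩ := card_eq_one.1 hcap
    have hgT : ∀ y, y ∈ g → y ∈ verts T → y = w := fun y h h' =>
      mem_singleton.1 (hw ▸ mem_inter.2 ⟨h, h'⟩)
    have hgnot : g ∉ T := by
      intro hgmem
      have : g ∩ verts T = g := inter_eq_left.2 fun y hy => mem_verts.2 ⟨g, hgmem, hy⟩
      rw [this, h3 g hg] at hcap
      omega
    by_cases hm : a ∈ verts T ∨ b ∈ verts T
    · obtain ⟨e₀, he₀, hae, hbe, huniq, htree, hverts⟩ :=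
        ih hm fun e he => hstar e (mem_insert_of_mem he)
      have hne : g ≠ e₀ := fun h => hgnot (h ▸ he₀)
      refine ⟨e₀, mem_insert_of_mem he₀, hae, hbe, ?_, ?_⟩
      · intro e he hea heb
        rcases mem_insert.1 he with rfl | he
        · exact absurd ((hgT a hea (mem_verts.2 ⟨_, he₀, hae⟩)).trans
            (hgT b heb (mem_verts.2 ⟨_, he₀, hbe⟩)).symm) hab
        · exact huniq e he hea heb
      · rw [erase_insert_of_ne hne, Finset.insert_comm]
        refine ⟨.extend _ g htree hg (by rw [hverts]; exact hcap), ?_⟩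
        rw [verts_insert, hverts, verts_insert]
    · push Not at hm
      obtain ⟨haT, hbT⟩ := hm
      have hr : LinearTreeFrom H v (insert g T) := .extend T g hT hg hcap
      have hboth : a ∈ verts (insert g T) ∧ b ∈ verts (insert g T) := by
        rcases hmeet with h | h
        · exact ⟨h, hr.both_mem_verts h3 hnc hva hf h fun e he hve => (hstar e he hve).1⟩
        · refine ⟨hr.both_mem_verts h3 hnc hvb ?_ h fun e he hve => (hstar e he hve).2, h⟩
          rwa [Finset.pair_comm]
      rw [verts_insert, mem_union, mem_union] at hboth
      have hag := hboth.1.resolve_right haT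
      have hbg := hboth.2.resolve_right hbT
      obtain ⟨hwg, hwT⟩ := mem_inter.1 (hw ▸ mem_singleton_self w)
      have hgeq : g = {w, a, b} := by
        refine (eq_of_subset_of_card_le ?_ ?_).symm
        · simp [insert_subset_iff, hwg, hag, hbg]
        · rw [h3 g hg, card_eq_three.2 ⟨w, a, b, ?_, ?_, hab, rfl⟩]
          · rintro rfl; exact haT hwT
          · rintro rfl; exact hbT hwT
      refine ⟨g, mem_insert_self _ _, hag, hbg, ?_, ?_⟩
      · intro e he hea heb
        rcases mem_insert.1 he with rfl | he
        · rfl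
        · exact absurd (mem_verts.2 ⟨e, he, hea⟩) haT
      · rw [erase_insert hgnot]
        refine ⟨.extend T _ hT.isLinearTree hf (card_eq_one.2 ⟨v, ?_⟩), ?_⟩
        · ext y
          simp only [mem_inter, mem_insert, mem_singleton]
          constructor
          · rintro ⟨rfl | rfl | rfl, hy⟩
            · rfl
            · exact absurd hy haT
            · exact absurd hy hbT
          · rintro rfl
            exact ⟨.inl rfl, hvT⟩
        · rw [verts_insert, verts_insert, hgeq]
          ext y
          simp only [mem_union, mem_insert, mem_singleton]
          constructor
          · rintro ((rfl | h | h) | h) <;> tauto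
          · rintro ((rfl | h | h) | h) <;> tauto
end

section
/- For every integer k ≥ 1, the 3-uniform hypergraph H consisting of k vertex-disjoint copies of K₅³ has n = 5k vertices, contains no linear cycle, and satisfies α(H) = 2k = 2n/5. (Hence the bound α(H) ≥ 2n/5 for n-vertex 3-uniform hypergraphs without linear cycles is sharp.) -/
/-!
In a linear cycle, three consecutive edges `e₀, e₁, e₂` satisfy `|e₀ ∩ e₁| = |e₁ ∩ e₂| = 1` and
`|e₀ ∩ e₂| ≤ 1` (it is `1` for length three and `0` otherwise). Meeting edges lie in the same copy
of `K₅³`, so all three live on five vertices. But `|e₀ ∪ e₁| = 3 + 3 - 1 = 5`, so `e₂` is covered by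
`e₀ ∪ e₁` and `3 = |e₂| ≤ |e₀ ∩ e₂| + |e₁ ∩ e₂| ≤ 2`, a contradiction.

A set is independent iff it has at most two vertices in each copy, so the independence number is
`2k`, attained by choosing two vertices from every copy.
-/

open Finset

variable {V : Type*} [Fintype V] [DecidableEq V]

/-- Three 3-element subsets of a 5-element set cannot meet pairwise in at most one point. Requiring
equality in `h01` and `h12` loses nothing, as two 3-subsets of a 5-set always meet. -/
lemma no_three_edges_in_five {V : Type*} [DecidableEq V] {a b c U : Finset V} (hU : U.card = 5)
    (ha : a ⊆ U) (hb : b ⊆ U) (hc : c ⊆ U) (ha3 : a.card = 3) (hb3 : b.card = 3)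
    (hc3 : c.card = 3) (h01 : (a ∩ b).card = 1) (h12 : (b ∩ c).card = 1)
    (h02 : (a ∩ c).card ≤ 1) : False := by
  have h1 := Finset.card_union_add_card_inter a b
  have hab : a ∪ b = U :=
    Finset.eq_of_subset_of_card_le (Finset.union_subset ha hb) (by omega)
  have hcov : c ⊆ (a ∩ c) ∪ (b ∩ c) := by
    rw [← Finset.union_inter_distrib_right, hab]
    exact Finset.subset_inter hc subset_rfl
  have h2 := (Finset.card_le_card hcov).trans (Finset.card_union_le _ _)
  omega

/-- For every `k ≥ 1`, the 3-uniform hypergraph consisting of `k` vertex-disjoint copies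
of `K₅³` has `n = 5k` vertices, contains no linear cycle, and has independence number
`2k = 2n/5`; hence the bound `α(H) ≥ 2n/5` is sharp. -/
theorem disjoint_K53_copies_sharp (k : ℕ) (hk : 1 ≤ k) :
    let H : Finset (Finset (Fin k × Fin 5)) :=
      Finset.univ.filter fun e : Finset (Fin k × Fin 5) =>
        e.card = 3 ∧ ∃ i : Fin k, ∀ v ∈ e, v.1 = i
    Fintype.card (Fin k × Fin 5) = 5 * k ∧
      ¬ HasLinearCycle H ∧
      indepNum H = 2 * k := by
  intro H
  have memH : ∀ e, e ∈ H ↔ e.card = 3 ∧ ∃ i : Fin k, ∀ v ∈ e, v.1 = i := by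
    intro e
    simp [H]
  refine ⟨by simp [mul_comm], ?_, ?_⟩
  · rintro ⟨m, hm, e, -, heH, hcons, hdisj⟩
    obtain ⟨h0, i, hi⟩ := (memH _).1 (heH 0)
    obtain ⟨h1, j, hj⟩ := (memH _).1 (heH (0 + 1))
    obtain ⟨h2, l, hl⟩ := (memH _).1 (heH (0 + 1 + 1))
    have h01 := hcons 0
    have h12 := hcons (0 + 1)
    obtain ⟨x, hx⟩ := Finset.card_pos.1 (h01.symm ▸ Nat.one_pos)
    obtain ⟨y, hy⟩ := Finset.card_pos.1 (h12.symm ▸ Nat.one_pos)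
    rw [Finset.mem_inter] at hx hy
    have hji : j = i := (hj x hx.2).symm.trans (hi x hx.1)
    have hli : l = i := ((hl y hy.2).symm.trans (hj y hy.1)).trans hji
    subst hji
    subst hli
    have h02 : (e 0 ∩ e (0 + 1 + 1)).card ≤ 1 := by
      by_cases hz : (0 + 1 + 1 + 1 : ZMod m) = 0
      · have h := hcons (0 + 1 + 1)
        rw [hz, Finset.inter_comm] at h
        exact h.le
      · have hne : ∀ t : ℕ, 0 < t → t < m → (t : ZMod m) ≠ 0 := by
          intro t ht htm h
          exact absurd (Nat.le_of_dvd ht ((ZMod.natCast_eq_zero_iff t m).1 h)) (by omega)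
        have ne1 := hne 1 (by omega) (by omega)
        have ne2 := hne 2 (by omega) (by omega)
        rw [hdisj 0 (0 + 1 + 1) ?_ ?_ hz]
        · simp
        · intro h
          apply ne2
          rw [h]
          norm_num
        · intro h
          apply ne1
          have h' : (0 : ZMod m) = 1 := by linear_combination h
          simpa using h'.symm
    have hsub : ∀ s : Finset (Fin k × Fin 5), (∀ v ∈ s, v.1 = l) →
        s ⊆ ({l} : Finset (Fin k)) ×ˢ (Finset.univ : Finset (Fin 5)) := by
      intro s hs v hv
      exact Finset.mem_product.2 ⟨Finset.mem_singleton.2 (hs v hv), Finset.mem_univ _⟩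
    exact no_three_edges_in_five (by simp) (hsub _ hi) (hsub _ hj) (hsub _ hl) h0 h1 h2 h01 h12 h02
  · unfold indepNum
    apply le_antisymm
    · refine Finset.sup_le fun S hS => ?_
      have hind : ∀ e ∈ H, ¬ e ⊆ S := (Finset.mem_filter.1 hS).2
      have hfib : ∀ i ∈ (Finset.univ : Finset (Fin k)), (S.filter fun v => v.1 = i).card ≤ 2 := by
        intro i _
        by_contra! hgt
        obtain ⟨t, ht, ht3⟩ := Finset.exists_subset_card_eq (Nat.succ_le_of_lt hgt)
        exact hind t ((memH t).2 ⟨ht3, i, fun v hv => (Finset.mem_filter.1 (ht hv)).2⟩)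
          (ht.trans (Finset.filter_subset _ _))
      have h := Finset.card_le_mul_card_image_of_maps_to
        (f := Prod.fst) (s := S) (t := Finset.univ) (fun _ _ => Finset.mem_univ _) 2 hfib
      simpa using h
    · -- Two fixed vertices of every copy form an independent set of size `2k`.
      have hcard : ((Finset.univ : Finset (Fin k)) ×ˢ ({0, 1} : Finset (Fin 5))).card = 2 * k := by
        simp [mul_comm]
      rw [← hcard]
      refine Finset.le_sup (f := Finset.card) (Finset.mem_filter.2 ⟨Finset.mem_univ _, ?_⟩)
      intro e he hsub
      obtain ⟨h3, i, hi⟩ := (memH e).1 he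
      have hle : e ⊆ ({i} : Finset (Fin k)) ×ˢ ({0, 1} : Finset (Fin 5)) := by
        intro v hv
        rw [Finset.mem_product]
        exact ⟨Finset.mem_singleton.2 (hi v hv), (Finset.mem_product.1 (hsub hv)).2⟩
      have h := Finset.card_le_card hle
      simp [h3] at h
end

section
/- The complete 3-uniform hypergraph K₅³ contains no linear cycle, and for every vertex v of K₅³ the strong degree satisfies d⁺(v) = 2 while the link of v (a complete graph on the remaining 4 vertices) cannot be pierced by two vertices, i.e., no set of at most 2 vertices meets every edge of the link of v. (Hence in the theorem forcing a linear cycle, the hypothesis d⁺(v) ≥ 3 cannot be weakened to requiring that the link of each vertex has no vertex cover of size at most two.) -/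
/-!
Two triples of a 5-element set that share exactly one vertex cover the whole set, so a third
triple, being covered by them, cannot meet each of them in at most one vertex. Three consecutive
edges of a linear cycle would be such triples, whatever the length of the cycle.

The link of `v` consists of all pairs avoiding `v`. Pairwise disjoint pairs among the remaining
four vertices number at most two, and two is attained. If `C` has at most two vertices, then at
least two vertices other than `v` lie outside `C`, and they form a link edge missing `C`.
-/

open Finset

variable {V : Type*} [Fintype V] [DecidableEq V]

/-- The edges of the link of `v`: the pairs `{x,y}` with `{v,x,y} ∈ H`. -/
def linkEdges (H : Finset (Finset V)) (v : V) : Finset (Finset V) :=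
  (H.filter fun e => v ∈ e).image fun e => e.erase v

/-- The strong degree `d⁺(v)`: the maximum number of pairwise disjoint edges of the
link of `v`. -/
def strongDeg (H : Finset (Finset V)) (v : V) : ℕ :=
  ((linkEdges H v).powerset.filter fun M =>
    ∀ p ∈ M, ∀ q ∈ M, p ≠ q → p ∩ q = ∅).sup Finset.card

theorem mem_linkEdges_complete (v : Fin 5) (p : Finset (Fin 5)) :
    p ∈ linkEdges (univ.filter fun e : Finset (Fin 5) => e.card = 3) v ↔
      v ∉ p ∧ p.card = 2 := by
  simp only [linkEdges, mem_image, mem_filter, mem_univ, true_and]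
  constructor
  · rintro ⟨e, ⟨he, hv⟩, rfl⟩
    exact ⟨notMem_erase v e, by rw [card_erase_of_mem hv, he]⟩
  · rintro ⟨hv, hp⟩
    exact ⟨insert v p, ⟨by rw [card_insert_of_notMem hv, hp], mem_insert_self v p⟩,
      erase_insert hv⟩

theorem not_hasLinearCycle_complete :
    ¬ HasLinearCycle (univ.filter fun e : Finset (Fin 5) => e.card = 3) := by
  rintro ⟨k, hk, e, -, hH, hcons, hdisj⟩
  have hcard : ∀ i, (e i).card = 3 := fun i => (mem_filter.mp (hH i)).2
  have h01 := hcons 0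
  have h12 := hcons (0 + 1)
  have : Fact (1 < k) := ⟨by omega⟩
  -- For `k = 3` the edges `0` and `2` are consecutive, for `k > 3` they are disjoint.
  have h02 : (e (0 + 1 + 1) ∩ e 0).card ≤ 1 := by
    by_cases h3 : (0 + 1 + 1 + 1 : ZMod k) = 0
    · have h := hcons (0 + 1 + 1)
      rw [h3] at h
      exact h.le
    · rw [hdisj (0 + 1 + 1) 0 ?_ h3 ?_, card_empty]
      · exact Nat.zero_le 1
      · intro h2
        have h2' : ((2 : ℕ) : ZMod k) = 0 := by
          rw [← h2]; norm_num
        have := Nat.le_of_dvd (by norm_num) ((ZMod.natCast_eq_zero_iff 2 k).mp h2')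
        omega
      · intro h
        simp at h
  have hunion : e 0 ∪ e (0 + 1) = univ := by
    apply eq_univ_of_card
    have := card_union_add_card_inter (e 0) (e (0 + 1))
    rw [hcard, hcard, h01] at this
    rw [Fintype.card_fin]
    omega
  have hsplit : e (0 + 1 + 1) = (e (0 + 1 + 1) ∩ e 0) ∪ (e (0 + 1) ∩ e (0 + 1 + 1)) := by
    rw [inter_comm (e (0 + 1)), ← inter_union_distrib_left, hunion, inter_univ]
  have h := card_union_le (e (0 + 1 + 1) ∩ e 0) (e (0 + 1) ∩ e (0 + 1 + 1))
  rw [← hsplit, hcard, h12] at h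
  omega

theorem strongDeg_complete (v : Fin 5) :
    strongDeg (univ.filter fun e : Finset (Fin 5) => e.card = 3) v = 2 := by
  apply le_antisymm
  · refine Finset.sup_le fun M hM => ?_
    obtain ⟨hsub, hdis⟩ := mem_filter.mp hM
    have hlink := fun p (hp : p ∈ M) =>
      (mem_linkEdges_complete v p).mp (mem_powerset.mp hsub hp)
    have hsum : (M.biUnion id).card = ∑ p ∈ M, p.card :=
      card_biUnion fun p hp q hq hpq => disjoint_iff_inter_eq_empty.mpr (hdis p hp q hq hpq)
    rw [sum_const_nat fun p hp => (hlink p hp).2] at hsum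
    have hle : (M.biUnion id).card ≤ (univ.erase v).card := by
      refine card_le_card fun x hx => ?_
      obtain ⟨p, hp, hxp⟩ := mem_biUnion.mp hx
      exact mem_erase.mpr ⟨fun h => (hlink p hp).1 (h ▸ hxp), mem_univ x⟩
    rw [card_erase_of_mem (mem_univ v), card_univ, Fintype.card_fin] at hle
    omega
  -- The two disjoint pairs are the translates, modulo 5, of `{1, 2}` and `{3, 4}` by `v`.
  · have hM : ({{v + 1, v + 2}, {v + 3, v + 4}} : Finset (Finset (Fin 5))).card = 2 := by
      revert v; decide
    refine hM.ge.trans (Finset.le_sup (f := Finset.card) (mem_filter.mpr ⟨?_, ?_⟩))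
    · rw [mem_powerset]
      intro p hp
      rw [mem_linkEdges_complete]
      revert v p; decide
    · revert v; decide

theorem exists_linkEdge_avoiding (v : Fin 5) (C : Finset (Fin 5)) (hC : C.card ≤ 2) :
    ∃ p ∈ linkEdges (univ.filter fun e : Finset (Fin 5) => e.card = 3) v, p ∩ C = ∅ := by
  have hcompl : 2 ≤ ((insert v C)ᶜ).card := by
    have := card_insert_le v C
    rw [card_compl, Fintype.card_fin]
    omega
  obtain ⟨p, hp, hcard⟩ := exists_subset_card_eq hcompl
  have hout : ∀ x ∈ p, x ≠ v ∧ x ∉ C := fun x hx => by simpa using hp hx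
  refine ⟨p, (mem_linkEdges_complete v p).mpr ⟨fun hv => (hout v hv).1 rfl, hcard⟩, ?_⟩
  exact disjoint_iff_inter_eq_empty.mp (disjoint_left.mpr fun x hx => (hout x hx).2)

/-- The complete 3-uniform hypergraph `K₅³` contains no linear cycle; every vertex `v`
has strong degree exactly 2, yet the link of `v` cannot be pierced by at most two
vertices: for every set `C` of at most 2 vertices some edge of the link of `v`
avoids `C`. -/
theorem K53_strongDeg_two_and_unpierceable :
    let H : Finset (Finset (Fin 5)) :=
      Finset.univ.filter fun e : Finset (Fin 5) => e.card = 3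
    ¬ HasLinearCycle H ∧
      ∀ v : Fin 5, strongDeg H v = 2 ∧
        ∀ C : Finset (Fin 5), C.card ≤ 2 → ∃ p ∈ linkEdges H v, p ∩ C = ∅ := by
  exact ⟨not_hasLinearCycle_complete, fun v =>
    ⟨strongDeg_complete v, fun C hC => exists_linkEdge_avoiding v C hC⟩⟩
end
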